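/- arXiv:2509.02501 — 6 statements merged into one kernel-verified Lean document; each statement's English description precedes it below -/
import Mathlib

section
/- Up to isomorphism, SL(2, ℤ/7ℤ) has exactly two nontrivial irreducible finite-dimensional complex representations ρ for which ρ(t) has at most three distinct eigenvalues; both are three-dimensional, with eigenvalue sets of ρ(t) equal to {ζ₇, ζ₇², ζ₇⁴} and {ζ₇³, ζ₇⁵, ζ₇⁶} respectively. -/
/-- The group `SL(2, ℤ/nℤ)`. -/
abbrev SL2 (n : ℕ) := Matrix.SpecialLinearGroup (Fin 2) (ZMod n)

/-- The element `t = [[1,1],[0,1]]` of `SL(2, ℤ/nℤ)`. -/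
def tGen (n : ℕ) : SL2 n := ⟨!![1, 1; 0, 1], by simp [Matrix.det_fin_two_of]⟩

/-- A representation is irreducible if the space is nonzero and the only invariant
subspaces are `⊥` and `⊤`. -/
def IsIrreducibleRep {G V : Type} [Group G] [AddCommGroup V] [Module ℂ V]
    (ρ : Representation ℂ G V) : Prop :=
  Nontrivial V ∧ ∀ p : Submodule ℂ V, (∀ g : G, p.map (ρ g) ≤ p) → p = ⊥ ∨ p = ⊤

/-- The primitive `m`-th root of unity `ζ_m = exp(2πi/m)`. -/
noncomputable def ζ (m : ℕ) : ℂ := Complex.exp (2 * Real.pi * Complex.I / m)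

/-- A representation is nontrivial if some group element acts nontrivially. -/
def IsNontrivialRep {G V : Type} [Group G] [AddCommGroup V] [Module ℂ V]
    (ρ : Representation ℂ G V) : Prop :=
  ∃ g : G, ρ g ≠ LinearMap.id

/-- Two representations are isomorphic if there is an equivariant linear equivalence. -/
def RepIso {G V W : Type} [Group G] [AddCommGroup V] [Module ℂ V]
    [AddCommGroup W] [Module ℂ W]
    (ρ : Representation ℂ G V) (ρ' : Representation ℂ G W) : Prop :=
  ∃ e : V ≃ₗ[ℂ] W, ∀ (g : G) (v : V), e (ρ g v) = ρ' g (e v)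

namespace KleinRep

lemma prim_sum {z : ℂ} (hz : IsPrimitiveRoot z 7) :
    1 + z + z^2 + z^3 + z^4 + z^5 + z^6 = 0 := by
  have := hz.geom_sum_eq_zero (by norm_num)
  simpa [Finset.sum_range_succ] using this

/-- the additive character -/
noncomputable def ch (z : ℂ) (x : ZMod 7) : ℂ := z ^ x.val

lemma ch_add {z : ℂ} (hz : IsPrimitiveRoot z 7) (x y : ZMod 7) :
    ch z (x + y) = ch z x * ch z y := by
  unfold ch
  rw [ZMod.val_add, ← pow_add, ← pow_eq_pow_mod _ hz.pow_eq_one]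

lemma ch_zero (z : ℂ) : ch z 0 = 1 := by simp [ch]

/-- exponents of `T` -/
def qq : Fin 3 → ZMod 7 := ![1, 2, 4]

/-- the logarithm on the torus modulo sign -/
def kk : ZMod 7 → Fin 3 := ![0, 0, 1, 2, 2, 1, 0]

noncomputable def Tm (z : ℂ) (x : ZMod 7) : Matrix (Fin 3) (Fin 3) ℂ :=
  Matrix.diagonal fun i => ch z (qq i * x)

noncomputable def Hm (a : ZMod 7) : Matrix (Fin 3) (Fin 3) ℂ :=
  Matrix.of fun i j => if i = j + kk a then 1 else 0

noncomputable def gg (z : ℂ) : ℂ := (2 * (z + z^2 + z^4) + 1) / 7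

noncomputable def sg (z : ℂ) : Fin 3 → ℂ :=
  ![(z^2 - z^5) * gg z, (z - z^6) * gg z, (z^4 - z^3) * gg z]

noncomputable def Sm (z : ℂ) : Matrix (Fin 3) (Fin 3) ℂ :=
  Matrix.of fun i j => sg z (i + j)

lemma Tm_add {z : ℂ} (hz : IsPrimitiveRoot z 7) (x y : ZMod 7) :
    Tm z (x + y) = Tm z x * Tm z y := by
  simp [Tm, mul_add, ch_add hz]

lemma Tm_zero (z : ℂ) : Tm z 0 = 1 := by
  simp [Tm, ch_zero]

lemma kk_mul : ∀ a b : ZMod 7, a ≠ 0 → b ≠ 0 → kk (a * b) = kk a + kk b := by decide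
lemma kk_inv_aux : ∀ a b : ZMod 7, a * b = 1 → ∀ i j : Fin 3,
    i + (j + kk a) = i - kk b + j := by
  decide
instance : Fact (Nat.Prime 7) := ⟨by norm_num⟩
lemma kk_inv (a : ZMod 7) (ha : a ≠ 0) (i j : Fin 3) :
    i + (j + kk a) = i - kk (a⁻¹) + j :=
  kk_inv_aux a a⁻¹ (mul_inv_cancel₀ ha) i j
lemma kk_neg : ∀ a : ZMod 7, kk (-a) = kk a := by decide
lemma qq_kk : ∀ a : ZMod 7, a ≠ 0 → ∀ j, qq (j + kk a) * a ^ 2 = qq j := by decide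

lemma Hm_mul {a b : ZMod 7} (ha : a ≠ 0) (hb : b ≠ 0) : Hm (a * b) = Hm a * Hm b := by
  ext i j
  simp only [Hm, Matrix.mul_apply, Matrix.of_apply, kk_mul a b ha hb, mul_ite, mul_one, mul_zero]
  simp [add_assoc, add_comm (kk a)]

lemma Hm_one : Hm 1 = 1 := by
  ext i j
  have : kk 1 = 0 := by decide
  simp [Hm, this, Matrix.one_apply]

lemma Hm_neg (a : ZMod 7) : Hm (-a) = Hm a := by
  simp [Hm, kk_neg]

lemma Hm_Tm (z : ℂ) {a : ZMod 7} (ha : a ≠ 0) (x : ZMod 7) :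
    Hm a * Tm z x = Tm z (a ^ 2 * x) * Hm a := by
  ext i j
  simp only [Tm, Matrix.mul_diagonal, Matrix.diagonal_mul, Hm, Matrix.of_apply]
  split_ifs with h
  · subst h
    rw [← mul_assoc, qq_kk a ha, one_mul, mul_one]
  · simp

lemma Sm_Hm (z : ℂ) {a : ZMod 7} (ha : a ≠ 0) : Sm z * Hm a = Hm a⁻¹ * Sm z := by
  ext i j
  simp only [Sm, Hm, Matrix.mul_apply, Matrix.of_apply, mul_ite, mul_one, mul_zero, ite_mul,
    one_mul, zero_mul]
  have : ∀ x : Fin 3, (i = x + kk a⁻¹) ↔ (x = i - kk a⁻¹) := fun x => by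
    constructor
    · rintro rfl; simp
    · rintro rfl; simp
  simp only [this, Finset.sum_ite_eq', Finset.mem_univ, if_true, kk_inv a ha]

lemma gg_sq {z : ℂ} (hz : IsPrimitiveRoot z 7) : gg z * gg z = -1/7 := by
  have h := prim_sum hz
  unfold gg
  linear_combination (4/49 * (z^2 - z + 2)) * h

lemma ch_1 (z : ℂ) : ch z 1 = z := by simp [ch, show (1 : ZMod 7).val = 1 from rfl]
lemma ch_2 (z : ℂ) : ch z 2 = z ^ 2 := by simp [ch, show (2 : ZMod 7).val = 2 from rfl]
lemma ch_4 (z : ℂ) : ch z 4 = z ^ 4 := by simp [ch, show (4 : ZMod 7).val = 4 from rfl]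
lemma ch_6 (z : ℂ) : ch z 6 = z ^ 6 := by simp [ch, show (6 : ZMod 7).val = 6 from rfl]
lemma ch_12 (z : ℂ) : ch z (2 * 6) = z ^ 5 := by
  simp [ch, show (2 * 6 : ZMod 7).val = 5 from rfl]
lemma ch_24 (z : ℂ) : ch z (4 * 6) = z ^ 3 := by
  simp [ch, show (4 * 6 : ZMod 7).val = 3 from rfl]

lemma Sm_sq {z : ℂ} (hz : IsPrimitiveRoot z 7) : Sm z * Sm z = 1 := by
  have h := prim_sum hz
  have hg := gg_sq hz
  ext i j
  simp only [Matrix.mul_apply, Fin.sum_univ_three, Sm, Matrix.of_apply, Matrix.one_apply]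
  fin_cases i <;> fin_cases j <;> simp [sg, show (1:Fin 3)+1=2 from rfl, show (2:Fin 3)+1=0 from rfl, show (1:Fin 3)+2=0 from rfl, show (2:Fin 3)+2=1 from rfl]
  · linear_combination ((z^2 - z^5)*(z^2 - z^5) + (z - z^6)*(z - z^6) + (z^4 - z^3)*(z^4 - z^3))*hg + ((-1)*z^0 + (1)*z^1 + (-1/7)*z^2 + (1/7)*z^3 + (-1/7)*z^4 + (1/7)*z^5 + (-1/7)*z^6)*h
  · linear_combination ((z^2 - z^5)*(z - z^6) + (z - z^6)*(z^4 - z^3) + (z^4 - z^3)*(z^2 - z^5))*hg + ((-1/7)*z^3 + (2/7)*z^4 + (-1/7)*z^5)*h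
  · linear_combination ((z^2 - z^5)*(z^4 - z^3) + (z - z^6)*(z^2 - z^5) + (z^4 - z^3)*(z - z^6))*hg + ((-1/7)*z^3 + (2/7)*z^4 + (-1/7)*z^5)*h
  · linear_combination ((z - z^6)*(z^2 - z^5) + (z^4 - z^3)*(z - z^6) + (z^2 - z^5)*(z^4 - z^3))*hg + ((-1/7)*z^3 + (2/7)*z^4 + (-1/7)*z^5)*h
  · linear_combination ((z - z^6)*(z - z^6) + (z^4 - z^3)*(z^4 - z^3) + (z^2 - z^5)*(z^2 - z^5))*hg + ((-1)*z^0 + (1)*z^1 + (-1/7)*z^2 + (1/7)*z^3 + (-1/7)*z^4 + (1/7)*z^5 + (-1/7)*z^6)*h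
  · linear_combination ((z - z^6)*(z^4 - z^3) + (z^4 - z^3)*(z^2 - z^5) + (z^2 - z^5)*(z - z^6))*hg + ((-1/7)*z^3 + (2/7)*z^4 + (-1/7)*z^5)*h
  · linear_combination ((z^4 - z^3)*(z^2 - z^5) + (z^2 - z^5)*(z - z^6) + (z - z^6)*(z^4 - z^3))*hg + ((-1/7)*z^3 + (2/7)*z^4 + (-1/7)*z^5)*h
  · linear_combination ((z^4 - z^3)*(z - z^6) + (z^2 - z^5)*(z^4 - z^3) + (z - z^6)*(z^2 - z^5))*hg + ((-1/7)*z^3 + (2/7)*z^4 + (-1/7)*z^5)*h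
  · linear_combination ((z^4 - z^3)*(z^4 - z^3) + (z^2 - z^5)*(z^2 - z^5) + (z - z^6)*(z - z^6))*hg + ((-1)*z^0 + (1)*z^1 + (-1/7)*z^2 + (1/7)*z^3 + (-1/7)*z^4 + (1/7)*z^5 + (-1/7)*z^6)*h

lemma Sm_Tm_one {z : ℂ} (hz : IsPrimitiveRoot z 7) :
    Sm z * Tm z 1 * Sm z = Tm z 6 * Sm z * Tm z 6 := by
  have h := prim_sum hz
  have hg := gg_sq hz
  have hd : gg z = (2 * (z + z^2 + z^4) + 1) / 7 := rfl
  ext i j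
  simp only [Tm, Matrix.mul_diagonal, Matrix.diagonal_mul]
  rw [Matrix.mul_apply]
  simp only [Fin.sum_univ_three, Matrix.mul_diagonal, Sm, Matrix.of_apply]
  fin_cases i <;> fin_cases j <;> simp [sg, qq, ch_1, ch_2, ch_4, ch_6, ch_12, ch_24, show (1:Fin 3)+1=2 from rfl, show (2:Fin 3)+1=0 from rfl, show (1:Fin 3)+2=0 from rfl, show (2:Fin 3)+2=1 from rfl]
  · linear_combination ((z^2 - z^5)*z^1*(z^2 - z^5) + (z - z^6)*z^2*(z - z^6) + (z^4 - z^3)*z^4*(z^4 - z^3))*hg - (z^2 - z^5)*z^6*z^6*hd + ((-1/7)*z^4 + (1/7)*z^6 + (2/7)*z^8 + (-3/7)*z^10 + (1/7)*z^11 + (-2/7)*z^12 + (2/7)*z^13 + (-2/7)*z^14 + (2/7)*z^15)*h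
  · linear_combination ((z^2 - z^5)*z^1*(z - z^6) + (z - z^6)*z^2*(z^4 - z^3) + (z^4 - z^3)*z^4*(z^2 - z^5))*hg - (z - z^6)*z^6*z^5*hd + ((-1/7)*z^4 + (1/7)*z^5 + (1/7)*z^6 + (-1/7)*z^7 + (2/7)*z^9 + (-3/7)*z^10 + (-1/7)*z^11 + (2/7)*z^13 + (-2/7)*z^14 + (2/7)*z^15)*h
  · linear_combination ((z^2 - z^5)*z^1*(z^4 - z^3) + (z - z^6)*z^2*(z^2 - z^5) + (z^4 - z^3)*z^4*(z - z^6))*hg - (z^4 - z^3)*z^6*z^3*hd + ((-1/7)*z^5 + (2/7)*z^6 + (-2/7)*z^7 + (3/7)*z^8 + (-4/7)*z^9 + (4/7)*z^10 + (-2/7)*z^11)*h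
  · linear_combination ((z - z^6)*z^1*(z^2 - z^5) + (z^4 - z^3)*z^2*(z - z^6) + (z^2 - z^5)*z^4*(z^4 - z^3))*hg - (z - z^6)*z^5*z^6*hd + ((-1/7)*z^4 + (1/7)*z^5 + (1/7)*z^6 + (-1/7)*z^7 + (2/7)*z^9 + (-3/7)*z^10 + (-1/7)*z^11 + (2/7)*z^13 + (-2/7)*z^14 + (2/7)*z^15)*h
  · linear_combination ((z - z^6)*z^1*(z - z^6) + (z^4 - z^3)*z^2*(z^4 - z^3) + (z^2 - z^5)*z^4*(z^2 - z^5))*hg - (z^4 - z^3)*z^5*z^5*hd + ((-1/7)*z^3 + (1/7)*z^4 + (2/7)*z^9 + (-4/7)*z^10 + (4/7)*z^11 + (-2/7)*z^12)*h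
  · linear_combination ((z - z^6)*z^1*(z^4 - z^3) + (z^4 - z^3)*z^2*(z^2 - z^5) + (z^2 - z^5)*z^4*(z - z^6))*hg - (z^2 - z^5)*z^5*z^3*hd + ((1/7)*z^5 + (-2/7)*z^6 + (1/7)*z^7 + (-1/7)*z^8 + (1/7)*z^9 + (-2/7)*z^10 + (2/7)*z^11)*h
  · linear_combination ((z^4 - z^3)*z^1*(z^2 - z^5) + (z^2 - z^5)*z^2*(z - z^6) + (z - z^6)*z^4*(z^4 - z^3))*hg - (z^4 - z^3)*z^3*z^6*hd + ((-1/7)*z^5 + (2/7)*z^6 + (-2/7)*z^7 + (3/7)*z^8 + (-4/7)*z^9 + (4/7)*z^10 + (-2/7)*z^11)*h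
  · linear_combination ((z^4 - z^3)*z^1*(z - z^6) + (z^2 - z^5)*z^2*(z^4 - z^3) + (z - z^6)*z^4*(z^2 - z^5))*hg - (z^2 - z^5)*z^3*z^5*hd + ((1/7)*z^5 + (-2/7)*z^6 + (1/7)*z^7 + (-1/7)*z^8 + (1/7)*z^9 + (-2/7)*z^10 + (2/7)*z^11)*h
  · linear_combination ((z^4 - z^3)*z^1*(z^4 - z^3) + (z^2 - z^5)*z^2*(z^2 - z^5) + (z - z^6)*z^4*(z - z^6))*hg - (z - z^6)*z^3*z^3*hd + ((-2/7)*z^6 + (2/7)*z^8 + (-1/7)*z^9 + (1/7)*z^10)*h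


lemma Sm_Tm_neg {z : ℂ} (hz : IsPrimitiveRoot z 7) :
    Sm z * Tm z 6 * Sm z = Tm z 1 * Sm z * Tm z 1 := by
  have h1 := Sm_Tm_one hz
  have h2 := Sm_sq hz
  have h3 : Tm z 1 * Tm z 6 = 1 := by rw [← Tm_add hz, ← Tm_zero z]; rfl
  have h4 : Tm z 6 * Tm z 1 = 1 := by rw [← Tm_add hz, ← Tm_zero z]; rfl
  generalize Sm z = S at *
  generalize Tm z 1 = T at *
  generalize Tm z 6 = T' at *
  have hl : (S * T * S) * (S * T' * S) = 1 := by
    calc _ = S * (T * (S * S) * T') * S := by simp only [mul_assoc]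
      _ = 1 := by rw [h2, mul_one, h3, mul_one, h2]
  have hr : (T * S * T) * (S * T * S) = 1 := by
    rw [h1]
    calc _ = T * (S * (T * T') * S) * T' := by simp only [mul_assoc]
      _ = 1 := by rw [h3, mul_one, h2, mul_one, h3]
  exact (left_inv_eq_right_inv hr hl).symm

lemma pm_sq : ∀ x : ZMod 7, x ≠ 0 → ∃ a : ZMod 7, a ≠ 0 ∧ (x = a ^ 2 * 1 ∨ x = a ^ 2 * 6) := by
  decide

lemma Sm_Tm_conj {z : ℂ} {x a : ZMod 7} (hx : x ≠ 0) (ha : a ≠ 0)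
    (h : Sm z * Tm z x * Sm z = Tm z (-x⁻¹) * Hm x⁻¹ * Sm z * Tm z (-x⁻¹)) :
    Sm z * Tm z (a ^ 2 * x) * Sm z =
      Tm z (-(a ^ 2 * x)⁻¹) * Hm (a ^ 2 * x)⁻¹ * Sm z * Tm z (-(a ^ 2 * x)⁻¹) := by
  have hai : a⁻¹ ≠ 0 := inv_ne_zero ha
  have e1 : Tm z (a ^ 2 * x) = Hm a * Tm z x * Hm a⁻¹ := by
    rw [Hm_Tm z ha, mul_assoc, ← Hm_mul ha hai, mul_inv_cancel₀ ha, Hm_one, mul_one]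
  have e2 : Hm a⁻¹ * Sm z = Sm z * Hm a := (Sm_Hm z ha).symm
  have e3 : Tm z (-x⁻¹) * Hm a = Hm a * Tm z (-(a ^ 2 * x)⁻¹) := by
    rw [Hm_Tm z ha]
    congr 2
    field_simp
  have e4 : Hm a⁻¹ * Tm z (-x⁻¹) = Tm z (-(a ^ 2 * x)⁻¹) * Hm a⁻¹ := by
    rw [Hm_Tm z hai]
    congr 2
    field_simp
  have e5 : Hm (a ^ 2 * x)⁻¹ = Hm a⁻¹ * Hm x⁻¹ * Hm a⁻¹ := by
    rw [← Hm_mul hai (inv_ne_zero hx), ← Hm_mul (mul_ne_zero hai (inv_ne_zero hx)) hai]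
    congr 1
    field_simp
  calc Sm z * Tm z (a ^ 2 * x) * Sm z
      = (Sm z * Hm a) * Tm z x * (Hm a⁻¹ * Sm z) := by rw [e1]; simp only [mul_assoc]
    _ = Hm a⁻¹ * (Sm z * Tm z x * Sm z) * Hm a := by
        rw [e2]; nth_rewrite 1 [Sm_Hm z ha]; simp only [mul_assoc]
    _ = (Hm a⁻¹ * Tm z (-x⁻¹)) * Hm x⁻¹ * Sm z * (Tm z (-x⁻¹) * Hm a) := by
        rw [h]; simp only [mul_assoc]
    _ = Tm z (-(a ^ 2 * x)⁻¹) * Hm a⁻¹ * Hm x⁻¹ * (Sm z * Hm a) * Tm z (-(a ^ 2 * x)⁻¹) := by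
        rw [e3, e4]; simp only [mul_assoc]
    _ = _ := by rw [← e2, e5]; simp only [mul_assoc]

lemma Sm_Tm_Sm {z : ℂ} (hz : IsPrimitiveRoot z 7) {x : ZMod 7} (hx : x ≠ 0) :
    Sm z * Tm z x * Sm z = Tm z (-x⁻¹) * Hm x⁻¹ * Sm z * Tm z (-x⁻¹) := by
  obtain ⟨a, ha, rfl | rfl⟩ := pm_sq x hx
  · apply Sm_Tm_conj (by decide) ha
    rw [inv_one, Hm_one, mul_one]
    exact Sm_Tm_one hz
  · apply Sm_Tm_conj (by decide) ha
    have : (6 : ZMod 7)⁻¹ = -1 := inv_eq_of_mul_eq_one_right (by decide)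
    rw [this, Hm_neg, Hm_one, mul_one, neg_neg]
    exact Sm_Tm_neg hz

/-! ### The representation through the Bruhat decomposition -/

def sGen : SL2 7 := ⟨!![0, -1; 1, 0], by simp [Matrix.det_fin_two_of]⟩

noncomputable def phi (z : ℂ) (g : SL2 7) : Matrix (Fin 3) (Fin 3) ℂ :=
  if g.1 1 0 = 0 then Tm z (g.1 0 0 * g.1 0 1) * Hm (g.1 0 0)
  else Tm z (g.1 0 0 * (g.1 1 0)⁻¹) * Hm (g.1 1 0)⁻¹ * Sm z * Tm z (g.1 1 1 * (g.1 1 0)⁻¹)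

lemma tGen_coe : (tGen 7).1 = !![1, 1; 0, 1] := rfl
lemma sGen_coe : sGen.1 = !![0, -1; 1, 0] := rfl

lemma det_eq (g : SL2 7) : g.1 0 0 * g.1 1 1 - g.1 0 1 * g.1 1 0 = 1 := by
  rw [← Matrix.det_fin_two]; exact g.2

lemma phi_one (z : ℂ) : phi z 1 = 1 := by
  simp [phi, Tm_zero, Hm_one]

lemma phi_t {z : ℂ} : phi z (tGen 7) = Tm z 1 := by
  simp [phi, tGen, Hm_one]

lemma phi_s {z : ℂ} : phi z sGen = Sm z := by
  simp [phi, sGen, Hm_one, Tm_zero]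

lemma phi_mul_t {z : ℂ} (hz : IsPrimitiveRoot z 7) (g : SL2 7) :
    phi z (g * tGen 7) = phi z g * phi z (tGen 7) := by
  rw [phi_t]
  have hd := det_eq g
  simp only [phi, Matrix.SpecialLinearGroup.coe_mul, tGen_coe, Matrix.mul_apply, Fin.sum_univ_two]
  simp only [Matrix.of_apply, Matrix.cons_val', Matrix.cons_val_zero, Matrix.cons_val_one,
    Matrix.cons_val_fin_one, mul_one, mul_zero, add_zero]
  generalize g.1 0 0 = a at *
  generalize g.1 0 1 = b at *
  generalize g.1 1 0 = c at *
  generalize g.1 1 1 = d at *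
  split_ifs with hc
  · subst hc
    have ha : a ≠ 0 := by rintro rfl; simp at hd
    rw [mul_assoc, Hm_Tm z ha, ← mul_assoc, ← Tm_add hz]
    congr 2
    ring
  · rw [mul_assoc _ (Tm z _) (Tm z 1), ← Tm_add hz]
    congr 2
    field_simp
    ring

lemma phi_mul_s {z : ℂ} (hz : IsPrimitiveRoot z 7) (g : SL2 7) :
    phi z (g * sGen) = phi z g * phi z sGen := by
  rw [phi_s]
  have hdet := det_eq g
  simp only [phi, Matrix.SpecialLinearGroup.coe_mul, sGen_coe, Matrix.mul_apply, Fin.sum_univ_two]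
  simp only [Matrix.of_apply, Matrix.cons_val', Matrix.cons_val_zero, Matrix.cons_val_one,
    Matrix.cons_val_fin_one, mul_one, mul_zero, add_zero, zero_add]
  generalize g.1 0 0 = a at *
  generalize g.1 0 1 = b at *
  generalize g.1 1 0 = c at *
  generalize g.1 1 1 = d at *
  by_cases hc : c = 0
  · subst hc
    have had : a * d = 1 := by simpa using hdet
    have ha : a ≠ 0 := by rintro rfl; simp at had
    have hd : d ≠ 0 := by rintro rfl; simp at had
    have hi : d⁻¹ = a := inv_eq_of_mul_eq_one_left had
    rw [if_neg hd, if_pos rfl, hi]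
    simp [Tm_zero, mul_comm]
  · rw [if_neg hc]
    by_cases hd : d = 0
    · subst hd
      have hbc : b = - c⁻¹ := by
        field_simp
        linear_combination -hdet
      rw [if_pos rfl, hbc, Hm_neg]
      simp only [zero_mul, Tm_zero, mul_one]
      rw [mul_assoc, Sm_sq hz, mul_one]
      congr 2
      ring
    · rw [if_neg hd]
      have hci : c⁻¹ ≠ 0 := inv_ne_zero hc
      have hdi : d⁻¹ ≠ 0 := inv_ne_zero hd
      have hcd : c * d⁻¹ ≠ 0 := mul_ne_zero hc hdi
      have e := Sm_Tm_Sm hz (mul_ne_zero hd hci)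
      have e0 : (d * c⁻¹)⁻¹ = c * d⁻¹ := by field_simp
      rw [e0] at e
      symm
      calc _ = Tm z (a * c⁻¹) * Hm c⁻¹ * (Sm z * Tm z (d * c⁻¹) * Sm z) := by simp only [mul_assoc]
        _ = Tm z (a * c⁻¹) * (Hm c⁻¹ * Tm z (-(c * d⁻¹))) * Hm (c * d⁻¹) * Sm z
            * Tm z (-(c * d⁻¹)) := by rw [e]; simp only [mul_assoc]
        _ = (Tm z (a * c⁻¹) * Tm z (c⁻¹ ^ 2 * -(c * d⁻¹))) * (Hm c⁻¹ * Hm (c * d⁻¹)) * Sm z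
            * Tm z (-(c * d⁻¹)) := by rw [Hm_Tm z hci]; simp only [mul_assoc]
        _ = _ := by
          rw [← Tm_add hz, ← Hm_mul hci hcd]
          congr 4
          · field_simp
            linear_combination hdet
          · field_simp
          · ring

/-- `s` and `t` generate. -/
lemma gen_induction {p : SL2 7 → Prop} (h1 : p 1) (hs : ∀ g, p g → p (g * sGen))
    (ht : ∀ g, p g → p (g * tGen 7)) (g : SL2 7) : p g := by
  have ht' : ∀ (n : ℕ) g, p g → p (g * tGen 7 ^ n) := by
    intro n
    induction n with
    | zero => intro g hg; simpa using hg
    | succ n ih => intro g hg; rw [pow_succ, ← mul_assoc]; exact ht _ (ih g hg)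
  have htp : ∀ n : ℕ, (tGen 7 ^ n).1 = !![1, (n : ZMod 7); 0, 1] := by
    intro n
    induction n with
    | zero => ext i j; fin_cases i <;> fin_cases j <;> simp
    | succ n ih =>
      rw [pow_succ, Matrix.SpecialLinearGroup.coe_mul, ih]
      ext i j; fin_cases i <;> fin_cases j <;> simp [tGen_coe, Matrix.mul_apply, add_comm]
  -- every element with `c ≠ 0`
  have hc : ∀ g : SL2 7, g.1 1 0 ≠ 0 → p g := by
    intro g hc
    have hd := det_eq g
    have e : g = 1 * tGen 7 ^ ((g.1 0 0 + 1) * (g.1 1 0)⁻¹).val * sGen * tGen 7 ^ (g.1 1 0).val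
        * sGen * tGen 7 ^ ((g.1 1 1 + 1) * (g.1 1 0)⁻¹).val := by
      apply Subtype.ext
      simp only [Matrix.SpecialLinearGroup.coe_mul, htp, one_mul, sGen_coe,
        ZMod.natCast_val, ZMod.cast_id', id_eq]
      ext i j
      fin_cases i <;> fin_cases j <;> simp [Matrix.mul_apply, Fin.sum_univ_two] <;> field_simp
      · ring
      · linear_combination -hd
      · ring
    rw [e]
    exact ht' _ _ (hs _ (ht' _ _ (hs _ (ht' _ _ h1))))
  by_cases h : g.1 1 0 = 0
  · have hd := det_eq g
    rw [h] at hd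
    have hd' : g.1 1 1 ≠ 0 := by intro h'; simp [h'] at hd
    have e : g = g * sGen * sGen * sGen * sGen := by
      have : sGen * sGen * sGen * sGen = 1 := by decide
      simp only [mul_assoc] at this ⊢; rw [this, mul_one]
    rw [e]
    refine hs _ (hs _ (hs _ (hc _ ?_)))
    simpa [sGen_coe, Matrix.mul_apply] using hd'
  · exact hc g h

lemma phi_mul {z : ℂ} (hz : IsPrimitiveRoot z 7) (g k : SL2 7) :
    phi z (g * k) = phi z g * phi z k := by
  induction k using gen_induction with
  | h1 => simp [phi_one]
  | hs k ih => rw [← mul_assoc, phi_mul_s hz, ih, phi_mul_s hz, mul_assoc]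
  | ht k ih => rw [← mul_assoc, phi_mul_t hz, ih, phi_mul_t hz, mul_assoc]

/-- the three dimensional representation -/
noncomputable def rep {z : ℂ} (hz : IsPrimitiveRoot z 7) :
    Representation ℂ (SL2 7) (Fin 3 → ℂ) where
  toFun g := Matrix.toLin' (phi z g)
  map_one' := by rw [phi_one, Matrix.toLin'_one]; rfl
  map_mul' g k := by rw [phi_mul hz, Matrix.toLin'_mul]; rfl


lemma rep_t {z : ℂ} (hz : IsPrimitiveRoot z 7) (v : Fin 3 → ℂ) :
    rep hz (tGen 7) v = ![z * v 0, z ^ 2 * v 1, z ^ 4 * v 2] := by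
  have : rep hz (tGen 7) = Matrix.toLin' (Tm z 1) := by rw [← phi_t]; rfl
  rw [this]
  ext i
  rw [Matrix.toLin'_apply]
  simp only [Tm, Matrix.mulVec_diagonal]
  fin_cases i <;> simp [qq, ch_1, ch_2, ch_4]

lemma rep_s {z : ℂ} (hz : IsPrimitiveRoot z 7) (v : Fin 3 → ℂ) :
    rep hz sGen v = ![sg z 0 * v 0 + sg z 1 * v 1 + sg z 2 * v 2,
      sg z 1 * v 0 + sg z 2 * v 1 + sg z 0 * v 2,
      sg z 2 * v 0 + sg z 0 * v 1 + sg z 1 * v 2] := by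
  have : rep hz sGen = Matrix.toLin' (Sm z) := by rw [← phi_s]; rfl
  rw [this]
  ext i
  rw [Matrix.toLin'_apply]
  simp only [Sm, Matrix.mulVec, dotProduct, Fin.sum_univ_three, Matrix.of_apply]
  fin_cases i <;> simp [show (1:Fin 3)+1=2 from rfl, show (2:Fin 3)+1=0 from rfl,
    show (1:Fin 3)+2=0 from rfl, show (2:Fin 3)+2=1 from rfl]

lemma prim_ne {z : ℂ} (hz : IsPrimitiveRoot z 7) {i j : ℕ} (hi : i < 7) (hj : j < 7)
    (h : i ≠ j) : z ^ i ≠ z ^ j := fun e => h (hz.pow_inj hi hj e)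

lemma rep_spec {z : ℂ} (hz : IsPrimitiveRoot z 7) :
    spectrum ℂ (rep hz (tGen 7)) = {z, z ^ 2, z ^ 4} := by
  have : rep hz (tGen 7) = Matrix.toLin' (Tm z 1) := by rw [← phi_t]; rfl
  rw [this, Matrix.spectrum_toLin', Tm, spectrum_diagonal]
  ext x
  simp [Fin.exists_fin_succ, qq, ch_1, ch_2, ch_4, eq_comm]

lemma gg_ne {z : ℂ} (hz : IsPrimitiveRoot z 7) : gg z ≠ 0 := by
  intro h
  have := gg_sq hz
  rw [h] at this
  norm_num at this

lemma sg_ne {z : ℂ} (hz : IsPrimitiveRoot z 7) (i : Fin 3) : sg z i ≠ 0 := by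
  have h1 : z ≠ z ^ 6 := by simpa using prim_ne hz (i := 1) (j := 6) (by norm_num) (by norm_num) (by norm_num)
  fin_cases i <;> simp [sg, gg_ne hz, sub_eq_zero, h1]
  · exact prim_ne hz (by norm_num) (by norm_num) (by norm_num)
  · exact prim_ne hz (by norm_num) (by norm_num) (by norm_num)

/-- vectors spread out -/
lemma rep_basis_all {z : ℂ} (hz : IsPrimitiveRoot z 7) (p : Submodule ℂ (Fin 3 → ℂ))
    (hT : ∀ v ∈ p, rep hz (tGen 7) v ∈ p) (v : Fin 3 → ℂ) (hv : v ∈ p) (i : Fin 3)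
    (hi : v i ≠ 0) : (Pi.single i 1 : Fin 3 → ℂ) ∈ p := by
  have a12 : z - z ^ 2 ≠ 0 := sub_ne_zero.2 (by
    simpa using prim_ne hz (i := 1) (j := 2) (by norm_num) (by norm_num) (by norm_num))
  have a14 : z - z ^ 4 ≠ 0 := sub_ne_zero.2 (by
    simpa using prim_ne hz (i := 1) (j := 4) (by norm_num) (by norm_num) (by norm_num))
  have a24 : z ^ 2 - z ^ 4 ≠ 0 :=
    sub_ne_zero.2 (prim_ne hz (by norm_num) (by norm_num) (by norm_num))
  have key : ∀ a b : ℂ, ![(z - a) * (z - b) * v 0, (z ^ 2 - a) * (z ^ 2 - b) * v 1,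
      (z ^ 4 - a) * (z ^ 4 - b) * v 2] ∈ p := fun a b => by
    have := p.add_mem (p.sub_mem (hT _ (hT _ hv)) (p.smul_mem (a + b) (hT _ hv)))
      (p.smul_mem (a * b) hv)
    convert this using 1
    rw [rep_t, rep_t]
    ext j
    rw [Pi.add_apply, Pi.sub_apply, Pi.smul_apply, Pi.smul_apply]
    fin_cases j <;> simp <;> ring
  have fin : ∀ (u : Fin 3 → ℂ) (c : ℂ), c ≠ 0 → u ∈ p → u = c • Pi.single i 1 →
      (Pi.single i 1 : Fin 3 → ℂ) ∈ p := fun u c hc hu e => by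
    rw [e] at hu
    exact (p.smul_mem_iff hc).1 hu
  fin_cases i
  · simp only [Fin.zero_eta] at hi fin ⊢
    refine fin _ ((z - z ^ 2) * (z - z ^ 4) * v 0) (by simp [*]) (key (z ^ 2) (z ^ 4)) ?_
    ext j; fin_cases j <;> simp
  · simp only [Fin.mk_one] at hi fin ⊢
    refine fin _ ((z ^ 2 - z) * (z ^ 2 - z ^ 4) * v 1) ?_ (key z (z ^ 4)) ?_
    · refine mul_ne_zero (mul_ne_zero ?_ a24) hi
      rw [← neg_sub]
      exact neg_ne_zero.2 a12
    ext j; fin_cases j <;> simp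
  · simp only [Fin.reduceFinMk] at hi fin ⊢
    refine fin _ ((z ^ 4 - z) * (z ^ 4 - z ^ 2) * v 2) ?_ (key z (z ^ 2)) ?_
    · refine mul_ne_zero (mul_ne_zero ?_ ?_) hi
      · rw [← neg_sub]
        exact neg_ne_zero.2 a14
      · rw [← neg_sub]
        exact neg_ne_zero.2 a24
    ext j; fin_cases j <;> simp

lemma rep_irr {z : ℂ} (hz : IsPrimitiveRoot z 7) : IsIrreducibleRep (rep hz) := by
  refine ⟨inferInstance, fun p hp => ?_⟩
  by_cases hb : p = ⊥
  · exact Or.inl hb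
  right
  obtain ⟨v, hv, hv0⟩ := p.ne_bot_iff.1 hb
  have hT : ∀ v ∈ p, rep hz (tGen 7) v ∈ p := fun v hv => hp _ (Submodule.mem_map_of_mem hv)
  have hS : ∀ v ∈ p, rep hz sGen v ∈ p := fun v hv => hp _ (Submodule.mem_map_of_mem hv)
  obtain ⟨i, hi⟩ := Function.ne_iff.1 hv0
  have h1 := hS _ (rep_basis_all hz p hT v hv i hi)
  have h2 : ∀ j, (Pi.single j 1 : Fin 3 → ℂ) ∈ p := by
    intro j
    refine rep_basis_all hz p hT _ h1 j ?_
    rw [rep_s]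
    have := sg_ne hz
    fin_cases i <;> fin_cases j <;> simp [this]
  rw [eq_top_iff]
  intro u _
  have : u = ∑ j, u j • (Pi.single j 1 : Fin 3 → ℂ) := by
    ext j; simp [Finset.sum_apply, Pi.single_apply]
  rw [this]
  exact p.sum_mem fun j _ => p.smul_mem _ (h2 j)

lemma rep_nontriv {z : ℂ} (hz : IsPrimitiveRoot z 7) : IsNontrivialRep (rep hz) := by
  refine ⟨tGen 7, fun h => ?_⟩
  have h1 := rep_t hz (Pi.single 0 1)
  rw [h] at h1
  have h2 := congrFun h1 0
  simp at h2
  exact hz.ne_one (by norm_num) h2.symm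


lemma scalars {z x y w : ℂ} (hz : IsPrimitiveRoot z 7)
    (e00 : z^1 * x * x + z^2 * y * y + z^4 * w * w - z^5 * x = 0)
    (e01 : z^1 * x * y + z^2 * y * w + z^4 * w * x - z^4 * y = 0)
    (e02 : z^1 * x * w + z^2 * y * x + z^4 * w * y - z^2 * w = 0)
    (e11 : z^1 * y * y + z^2 * w * w + z^4 * x * x - z^3 * w = 0)
    (e12 : z^1 * y * w + z^2 * w * x + z^4 * x * y - z^1 * x = 0)
    (e22 : z^1 * w * w + z^2 * x * x + z^4 * y * y - z^6 * y = 0)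
    (pl : z * x + z^4 * y + z^2 * w = 0) (hne : ¬ (x = 0 ∧ y = 0 ∧ w = 0)) :
    x = sg z 0 ∧ y = sg z 1 ∧ w = sg z 2 := by
  have h := prim_sum hz
  have hz0 : z ≠ 0 := hz.ne_zero (by norm_num)
  have hd : gg z = (2 * (z + z^2 + z^4) + 1) / 7 := rfl
  have hy : y - ((-1)*z^0 + (-1)*z^3 + (-1)*z^4) * x = 0 := by
    linear_combination ((3/7)*z^1 + (2/7)*z^2 + (4/7)*z^3 + (2/7)*z^4 + (3/7)*z^5)*e00
      + ((-4/7)*z^0 + (-2/7)*z^2 + (-3/7)*z^3 + (-3/7)*z^4 + (-2/7)*z^5)*e01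
      + ((-3/7)*z^0 + (-4/7)*z^1 + (-3/7)*z^2 + (-2/7)*z^4 + (-2/7)*z^5)*e02
      + ((3/7)*z^0 + (4/7)*z^1 + (3/7)*z^2 + (2/7)*z^4 + (2/7)*z^5)*e11
      + ((4/7)*z^1 + (-2/7)*z^2 + (3/7)*z^3 + (5/7)*z^4 + (4/7)*z^5)*e12
      + ((4/7)*z^0 + (2/7)*z^2 + (3/7)*z^3 + (3/7)*z^4 + (2/7)*z^5)*e22
      + ((-5/7)*z^0 + (-3/7)*z^1 + (-1/7)*z^2 + (1/7)*z^3 + (-4/7)*z^4 + (-2/7)*z^5)*pl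
      + ((-1)*z^1 + (-1)*z^3 + (-1)*z^4 + (-1)*z^5)*(x*pl)
      + (((-2/7)*z^3)*x*x
      + ((-3/7)*z^1 + (-1/7)*z^2 + (-2/7)*z^3)*y*y
      + ((-4/7)*z^1 + (1/7)*z^2 + (-3/7)*z^3)*w*w
      + ((4/7)*z^1 + (-1/7)*z^2 + (3/7)*z^3)*x*y
      + ((2/7)*z^3)*y*w
      + ((3/7)*z^1 + (1/7)*z^2 + (2/7)*z^3)*x*w
      + ((1)*z^0 + (-2/7)*z^1 + (2/7)*z^2 + (-1/7)*z^3 + (3/7)*z^4)*x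
      + ((1)*z^0 + (-1)*z^1 + (1/7)*z^4 + (2/7)*z^5)*y
      + ((2/7)*z^2)*w) * h
  have hw : ∀ w', z * x + z^4 * y + z^2 * w' = 0 → w = w' := fun w' e => by
    have : z^2 * (w - w') = 0 := by linear_combination pl - e
    simpa [hz0, sub_eq_zero] using this
  have hx0 : x ≠ 0 := fun hx => by
    have hy' : y = 0 := by rw [hx] at hy; simpa using hy
    exact hne ⟨hx, hy', hw 0 (by rw [hx, hy']; ring)⟩
  have hxx : x * x - ((-2/7)*z^0 + (-1/7)*z^2 + (2/7)*z^3 + (2/7)*z^4 + (-1/7)*z^5) * x = 0 := by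
    linear_combination ((-1/7)*z^1 + (-2/7)*z^2 + (-1/7)*z^3 + (-2/7)*z^4 + (-1/7)*z^5)*e00
      + ((-1/14)*z^0 + (1/14)*z^1 + (-3/14)*z^2 + (1/7)*z^3 + (-1/14)*z^4 + (1/7)*z^5)*e01
      + ((1/14)*z^0 + (3/14)*z^1 + (3/14)*z^2 + (2/7)*z^3 + (1/14)*z^4 + (1/7)*z^5)*e02
      + ((-1/7)*z^0 + (-3/7)*z^1 + (-1/7)*z^2 + (-1/7)*z^4 + (-1/7)*z^5)*e11
      + ((5/14)*z^0 + (5/14)*z^1 + (5/14)*z^2 + (4/7)*z^3 + (1/14)*z^4 + (2/7)*z^5)*e12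
      + ((1/7)*z^2 + (-1/7)*z^3 + (-1/7)*z^4 + (1/7)*z^5)*e22
      + ((3/14)*z^0 + (3/14)*z^1 + (-1/14)*z^2 + (2/7)*z^3 + (3/14)*z^4 + (1/7)*z^5)*pl
      + ((-5/7)*z^0 + (-4/7)*z^1 + (-4/7)*z^2 + (-5/7)*z^3 + (-3/7)*z^5)*(x*pl)
      + (((1)*z^0 + (-2/7)*z^1 + (1/7)*z^3)*x*x
      + ((1/7)*z^1 + (2/7)*z^2 + (-1/7)*z^3)*y*y
      + ((1/7)*z^2 + (1/7)*z^3)*w*w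
      + ((1/14)*z^1 + (-3/14)*z^2 + (1/7)*z^3)*x*y
      + ((-5/14)*z^1 + (1/14)*z^2 + (-1/7)*z^3)*y*w
      + ((-1/14)*z^1 + (3/14)*z^2 + (-1/7)*z^3)*x*w
      + ((2/7)*z^0 + (-1/7)*z^1 + (1/7)*z^2 + (-1/7)*z^3 + (-1/7)*z^4)*x
      + ((-2/7)*z^4 + (1/7)*z^5)*y
      + ((-1/7)*z^2)*w) * h
  have hx1 : x = (-2/7)*z^0 + (-1/7)*z^2 + (2/7)*z^3 + (2/7)*z^4 + (-1/7)*z^5 := by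
    apply mul_right_cancel₀ hx0
    linear_combination hxx
  have hx : x = sg z 0 := by
    simp only [sg, Matrix.cons_val_zero]
    linear_combination hx1 - (z^2 - z^5) * hd + ((-2/7)*z^0 + (2/7)*z^1 + (-2/7)*z^2 + (2/7)*z^3) * h
  have hy1 : y = sg z 1 := by
    simp only [sg, Matrix.cons_val_one, Matrix.cons_val_zero]
    linear_combination hy + ((-1)*z^0 + (-1)*z^3 + (-1)*z^4) * hx1 - (z - z^6) * hd + ((2/7)*z^0 + (-3/7)*z^1 + (-1/7)*z^3 + (2/7)*z^4) * h
  refine ⟨hx, hy1, hw _ ?_⟩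
  rw [hx, hy1]
  simp [sg]
  linear_combination gg z * ((1)*z^3 + (-1)*z^4) * h


def hGen : SL2 7 := ⟨!![2, 0; 0, 4], by decide⟩

section Classify

variable {W : Type} [AddCommGroup W] [Module ℂ W] (ρ : Representation ℂ (SL2 7) W)

lemma ap {a b : SL2 7} (e : a = b) (v : W) : ρ a v = ρ b v := by rw [e]

lemma act_H3 (v : W) : ρ hGen (ρ hGen (ρ hGen v)) = v := by
  have := ap ρ (show hGen * hGen * hGen = 1 by decide) v
  simpa only [map_mul, Module.End.mul_apply, map_one, Module.End.one_apply] using this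

lemma act_TH (v : W) : ρ (tGen 7) (ρ hGen v) = ρ hGen (ρ (tGen 7) (ρ (tGen 7) v)) := by
  have := ap ρ (show tGen 7 * hGen = hGen * tGen 7 * tGen 7 by decide) v
  simpa only [map_mul, Module.End.mul_apply] using this

lemma act_SH (v : W) : ρ sGen (ρ hGen v) = ρ hGen (ρ hGen (ρ sGen v)) := by
  have := ap ρ (show sGen * hGen = hGen * hGen * sGen by decide) v
  simpa only [map_mul, Module.End.mul_apply] using this

lemma act_1 (v : W) : ρ sGen (ρ (tGen 7) (ρ sGen v)) =
    ρ (tGen 7 ^ 6) (ρ sGen (ρ (tGen 7 ^ 6) v)) := by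
  have := ap ρ (show sGen * tGen 7 * sGen = tGen 7 ^ 6 * sGen * tGen 7 ^ 6 by decide) v
  simpa only [map_mul, Module.End.mul_apply] using this

lemma act_2 (v : W) : ρ sGen (ρ (tGen 7 ^ 2) (ρ sGen v)) =
    ρ (tGen 7 ^ 3) (ρ hGen (ρ hGen (ρ sGen (ρ (tGen 7 ^ 3) v)))) := by
  have := ap ρ (show sGen * tGen 7 ^ 2 * sGen =
    tGen 7 ^ 3 * hGen * hGen * sGen * tGen 7 ^ 3 by decide) v
  simpa only [map_mul, Module.End.mul_apply] using this

lemma act_4 (v : W) : ρ sGen (ρ (tGen 7 ^ 4) (ρ sGen v)) =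
    ρ (tGen 7 ^ 5) (ρ hGen (ρ sGen (ρ (tGen 7 ^ 5) v))) := by
  have := ap ρ (show sGen * tGen 7 ^ 4 * sGen =
    tGen 7 ^ 5 * hGen * sGen * tGen 7 ^ 5 by decide) v
  simpa only [map_mul, Module.End.mul_apply] using this

variable {ρ}

lemma eig_pow {v : W} {μ : ℂ} (h : ρ (tGen 7) v = μ • v) (n : ℕ) :
    ρ (tGen 7 ^ n) v = μ ^ n • v := by
  induction n with
  | zero => simp
  | succ n ih =>
    rw [pow_succ, map_mul, Module.End.mul_apply, h, map_smul, ih, smul_smul, pow_succ, mul_comm]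

lemma eig_H {v : W} {μ : ℂ} (h : ρ (tGen 7) v = μ • v) :
    ρ (tGen 7) (ρ hGen v) = μ ^ 2 • ρ hGen v := by
  rw [act_TH, h, map_smul, h, map_smul, map_smul, smul_smul, pow_two]

lemma indep {z : ℂ} (hz : IsPrimitiveRoot z 7) {u1 u2 u4 : W}
    (h1 : ρ (tGen 7) u1 = z • u1) (h2 : ρ (tGen 7) u2 = z ^ 2 • u2)
    (h4 : ρ (tGen 7) u4 = z ^ 4 • u4) (h : u1 + u2 + u4 = 0) : u1 = 0 ∧ u2 = 0 ∧ u4 = 0 := by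
  have a12 : z - z ^ 2 ≠ 0 := sub_ne_zero.2 (by
    simpa using prim_ne hz (i := 1) (j := 2) (by norm_num) (by norm_num) (by norm_num))
  have a14 : z - z ^ 4 ≠ 0 := sub_ne_zero.2 (by
    simpa using prim_ne hz (i := 1) (j := 4) (by norm_num) (by norm_num) (by norm_num))
  have a24 : z ^ 2 - z ^ 4 ≠ 0 :=
    sub_ne_zero.2 (prim_ne hz (by norm_num) (by norm_num) (by norm_num))
  have s1 := congrArg (ρ (tGen 7)) h
  simp only [map_add, h1, h2, h4, map_zero] at s1
  have s2 := congrArg (ρ (tGen 7)) s1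
  simp only [map_add, map_smul, h1, h2, h4, map_zero, smul_smul] at s2
  have e1 : ((z - z ^ 2) * (z - z ^ 4)) • u1 = 0 := by
    linear_combination (norm := module) s2 - (z ^ 2 + z ^ 4) • s1 + (z ^ 2 * z ^ 4) • h
  have e2 : ((z - z ^ 2) * (z ^ 2 - z ^ 4)) • u2 = 0 := by
    linear_combination (norm := module) -(s2 - (z + z ^ 4) • s1 + (z * z ^ 4) • h)
  have e4 : ((z - z ^ 4) * (z ^ 2 - z ^ 4)) • u4 = 0 := by
    linear_combination (norm := module) s2 - (z + z ^ 2) • s1 + (z * z ^ 2) • h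
  refine ⟨?_, ?_, ?_⟩
  · simpa [a12, a14, a24] using e1
  · simpa [a12, a14, a24] using e2
  · simpa [a12, a14, a24] using e4

variable (ρ) in
/-- Projections (up to scalars) to the eigenspaces. -/
noncomputable def pr (c a b : ℂ) : W →ₗ[ℂ] W :=
  c • ((ρ (tGen 7) - a • LinearMap.id) ∘ₗ (ρ (tGen 7) - b • LinearMap.id))

lemma pr_apply (c a b : ℂ) (u : W) : pr ρ c a b u =
    c • (ρ (tGen 7) (ρ (tGen 7) u) - (a + b) • ρ (tGen 7) u + (a * b) • u) := by
  simp only [pr, LinearMap.smul_apply, LinearMap.comp_apply, LinearMap.sub_apply,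
    LinearMap.id_apply, map_sub, map_smul]
  module

variable (ρ) in
/-- the cubic relation -/
def Cubic (z : ℂ) : Prop := ∀ u : W, ρ (tGen 7) (ρ (tGen 7) (ρ (tGen 7) u)) =
  (z + z ^ 2 + z ^ 4) • ρ (tGen 7) (ρ (tGen 7) u)
    - (z * z ^ 2 + z * z ^ 4 + z ^ 2 * z ^ 4) • ρ (tGen 7) u + (z * z ^ 2 * z ^ 4) • u

lemma decomp {z : ℂ} (hz : IsPrimitiveRoot z 7) (hc : Cubic ρ z) :
    ∃ P : W →ₗ[ℂ] W, (∀ u, ρ (tGen 7) (P u) = z • P u) ∧ ∀ u, ∃ u2 u4,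
      ρ (tGen 7) u2 = z ^ 2 • u2 ∧ ρ (tGen 7) u4 = z ^ 4 • u4 ∧ u = P u + u2 + u4 := by
  have a12 : z - z ^ 2 ≠ 0 := sub_ne_zero.2 (by
    simpa using prim_ne hz (i := 1) (j := 2) (by norm_num) (by norm_num) (by norm_num))
  have a14 : z - z ^ 4 ≠ 0 := sub_ne_zero.2 (by
    simpa using prim_ne hz (i := 1) (j := 4) (by norm_num) (by norm_num) (by norm_num))
  have a24 : z ^ 2 - z ^ 4 ≠ 0 :=
    sub_ne_zero.2 (prim_ne hz (by norm_num) (by norm_num) (by norm_num))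
  refine ⟨pr ρ ((z - z ^ 2) * (z - z ^ 4))⁻¹ (z ^ 2) (z ^ 4), fun u => ?_, fun u =>
    ⟨pr ρ (-((z - z ^ 2) * (z ^ 2 - z ^ 4))⁻¹) z (z ^ 4) u,
      pr ρ ((z - z ^ 4) * (z ^ 2 - z ^ 4))⁻¹ z (z ^ 2) u, ?_, ?_, ?_⟩⟩
  · simp only [pr_apply, map_smul, map_add, map_sub, hc u]
    module
  · simp only [pr_apply, map_smul, map_add, map_sub, hc u]
    module
  · simp only [pr_apply, map_smul, map_add, map_sub, hc u]
    module
  · simp only [pr_apply]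
    generalize ρ (tGen 7) (ρ (tGen 7) u) = p
    generalize ρ (tGen 7) u = q
    generalize h2 : z ^ 2 = z2 at *
    generalize z ^ 4 = z4 at *
    match_scalars <;> field_simp <;> ring

lemma trace_rel {z : ℂ} (hz : IsPrimitiveRoot z 7) (hc : Cubic ρ z) (u : W) :
    ρ (tGen 7) u + ρ (tGen 7 ^ 2) u + ρ (tGen 7 ^ 4) u = (z + z ^ 2 + z ^ 4) • u := by
  obtain ⟨P, hP, hd⟩ := decomp hz hc
  obtain ⟨u2, u4, h2, h4, e⟩ := hd u
  have h1 := hP u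
  rw [e]
  generalize P u = u1 at *
  have h7 := hz.pow_eq_one
  simp only [map_add, eig_pow h1, eig_pow h2, eig_pow h4, h1, h2, h4]
  match_scalars
  · ring
  · linear_combination z * h7
  · linear_combination (z + z ^ 2 + z ^ 9) * h7

/-- The key structural step: `S v` lies in the span of `v, Hv, H²v`. -/
lemma key_step {z x ε : ℂ} (hz : IsPrimitiveRoot z 7) (hc : Cubic ρ z)
    {v u2 u4 : W} (hv0 : v ≠ 0) (hv : ρ (tGen 7) v = z • v) (hε : ρ sGen (ρ sGen v) = ε • v)
    (h2 : ρ (tGen 7) u2 = z ^ 2 • u2) (h4 : ρ (tGen 7) u4 = z ^ 4 • u4)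
    (hS : ρ sGen v = x • v + u2 + u4) :
    ∃ y w : ℂ, z * x + z ^ 4 * y + z ^ 2 * w = 0 ∧
      ρ sGen v = x • v + y • ρ hGen v + w • ρ hGen (ρ hGen v) := by
  have h7 := hz.pow_eq_one
  obtain ⟨b, hb⟩ : ∃ b, b = ρ hGen (ρ hGen u2) := ⟨_, rfl⟩
  obtain ⟨c, hcc⟩ : ∃ c, c = ρ hGen u4 := ⟨_, rfl⟩
  have hHb : ρ hGen b = u2 := by rw [hb, act_H3]
  have hHc : ρ hGen (ρ hGen c) = u4 := by rw [hcc, act_H3]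
  have eb : ρ (tGen 7) b = z • b := by
    have := eig_H (eig_H h2)
    rw [← hb, show ((z ^ 2) ^ 2) ^ 2 = z by linear_combination z * h7] at this
    exact this
  have ec : ρ (tGen 7) c = z • c := by
    have := eig_H h4
    rw [← hcc, show (z ^ 4) ^ 2 = z by linear_combination z * h7] at this
    exact this
  rw [← hHb, ← hHc] at hS
  have e0 := trace_rel hz hc (ρ sGen v)
  have e1 := congrArg (ρ sGen) e0
  rw [map_add, map_add, act_1, act_2, act_4, eig_pow hv, eig_pow hv, eig_pow hv] at e1
  simp only [map_smul, hε] at e1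
  rw [hS] at e1
  simp only [map_add, map_smul, act_H3] at e1
  have q2 := fun {v : W} (h : ρ (tGen 7) v = z • v) => eig_H h
  have q4 := fun {v : W} (h : ρ (tGen 7) v = z • v) => eig_H (eig_H h)
  simp only [eig_pow hv, eig_pow eb, eig_pow ec, eig_pow (q2 hv), eig_pow (q2 eb),
    eig_pow (q2 ec), eig_pow (q4 hv), eig_pow (q4 eb), eig_pow (q4 ec)] at e1
  have i := indep hz (ρ := ρ)
    (u1 := (z ^ 12 * x) • v + z ^ 6 • b + z ^ 10 • c - ((z + z ^ 2 + z ^ 4) * ε) • v)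
    (u2 := z ^ 18 • ρ hGen b + z ^ 9 • ρ hGen c + (z ^ 15 * x) • ρ hGen v)
    (u4 := z ^ 30 • ρ hGen (ρ hGen c) + (z ^ 15 * x) • ρ hGen (ρ hGen v)
      + z ^ 25 • ρ hGen (ρ hGen b))
    (by simp only [map_add, map_sub, map_smul, hv, eb, ec]; module)
    (by simp only [map_add, map_sub, map_smul, q2 hv, q2 eb, q2 ec]; module)
    (by simp only [map_add, map_sub, map_smul, q4 hv, q4 eb, q4 ec]; module)
    (by linear_combination (norm := module) e1)
  obtain ⟨i1, i2, -⟩ := i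
  have i2' := congrArg (fun u => ρ hGen (ρ hGen u)) i2
  simp only [map_add, map_smul, act_H3, map_zero] at i2'
  have z10 : z ^ 10 = z ^ 3 := by linear_combination z ^ 3 * h7
  have z12 : z ^ 12 = z ^ 5 := by linear_combination z ^ 5 * h7
  have z18 : z ^ 18 = z ^ 4 := by linear_combination (z ^ 11 + z ^ 4) * h7
  have z9 : z ^ 9 = z ^ 2 := by linear_combination z ^ 2 * h7
  have z15 : z ^ 15 = z := by linear_combination (z ^ 8 + z) * h7
  rw [z10, z12] at i1
  rw [z18, z9, z15] at i2'
  have hz1 : z - 1 ≠ 0 := sub_ne_zero.2 (hz.ne_one (by norm_num))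
  have kb : (z - 1) • b = ((z + z ^ 2 + z ^ 4) * ε * z ^ 2 - x + x * z ^ 4) • v := by
    have t1 : (z ^ 8 - z ^ 7) • b = ((z + z ^ 2 + z ^ 4) * ε * z ^ 2 - z ^ 7 * x + x * z ^ 4) • v := by
      linear_combination (norm := module) z ^ 2 • i1 - z ^ 3 • i2'
    rwa [show z ^ 8 - z ^ 7 = z - 1 by linear_combination (z - 1) * h7, h7, one_mul] at t1
  have kc : (z - 1) • c = (-((z + z ^ 2 + z ^ 4) * ε * z ^ 4 - z ^ 2 * x + x)) • v := by
    have t1 : (z ^ 8 - z ^ 7) • c =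
        (-((z + z ^ 2 + z ^ 4) * ε * z ^ 4 - z ^ 9 * x + z ^ 7 * x)) • v := by
      linear_combination (norm := module) (- z ^ 4) • i1 + z ^ 6 • i2'
    rwa [show z ^ 8 - z ^ 7 = z - 1 by linear_combination (z - 1) * h7, h7, one_mul, z9] at t1
  obtain ⟨y, hy⟩ : ∃ y : ℂ, b = y • v :=
    ⟨(z - 1)⁻¹ * _, by rw [mul_smul, ← kb, smul_smul, inv_mul_cancel₀ hz1, one_smul]⟩
  obtain ⟨w, hw⟩ : ∃ w : ℂ, c = w • v :=
    ⟨(z - 1)⁻¹ * _, by rw [mul_smul, ← kc, smul_smul, inv_mul_cancel₀ hz1, one_smul]⟩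
  refine ⟨y, w, ?_, ?_⟩
  · have : (z * x + z ^ 4 * y + z ^ 2 * w) • v = 0 := by
      rw [hy, hw] at i2'
      linear_combination (norm := module) i2'
    simpa [hv0] using this
  · rw [hS, hy, hw]
    simp only [map_smul]

lemma coef {z : ℂ} (hz : IsPrimitiveRoot z 7) {v : W} (hv0 : v ≠ 0)
    (hv : ρ (tGen 7) v = z • v) {p q r : ℂ}
    (h : p • v + q • ρ hGen v + r • ρ hGen (ρ hGen v) = 0) : p = 0 ∧ q = 0 ∧ r = 0 := by
  have e2 := eig_H hv
  have e4 := eig_H e2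
  have hH : ρ hGen v ≠ 0 := fun e => hv0 (by rw [← act_H3 ρ v, e, map_zero, map_zero])
  have hH2 : ρ hGen (ρ hGen v) ≠ 0 := fun e => hv0 (by rw [← act_H3 ρ v, e, map_zero])
  have i := indep hz (ρ := ρ) (u1 := p • v) (u2 := q • ρ hGen v)
    (u4 := r • ρ hGen (ρ hGen v)) (by rw [map_smul, hv]; module)
    (by rw [map_smul, e2]; module) (by rw [map_smul, e4]; module) h
  simpa [hv0, hH, hH2] using i

lemma sg_determined {z x y w : ℂ} (hz : IsPrimitiveRoot z 7) {v : W} (hv0 : v ≠ 0)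
    (hv : ρ (tGen 7) v = z • v) (pl : z * x + z ^ 4 * y + z ^ 2 * w = 0)
    (hS : ρ sGen v = x • v + y • ρ hGen v + w • ρ hGen (ρ hGen v)) :
    x = sg z 0 ∧ y = sg z 1 ∧ w = sg z 2 := by
  have h7 := hz.pow_eq_one
  have e2 := eig_H hv
  have e4 := eig_H e2
  have s2 : ρ sGen (ρ hGen v) = y • v + w • ρ hGen v + x • ρ hGen (ρ hGen v) := by
    rw [act_SH, hS]
    simp only [map_add, map_smul, act_H3]
    abel
  have s4 : ρ sGen (ρ hGen (ρ hGen v)) = w • v + x • ρ hGen v + y • ρ hGen (ρ hGen v) := by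
    rw [act_SH, s2]
    simp only [map_add, map_smul, act_H3]
    abel
  have r1 := act_1 ρ v
  have r2 := act_1 ρ (ρ hGen v)
  have r4 := act_1 ρ (ρ hGen (ρ hGen v))
  simp only [hS, s2, s4, map_add, map_smul, hv, e2, e4, eig_pow hv, eig_pow e2, eig_pow e4] at r1 r2 r4
  obtain ⟨e00, e01, e02⟩ := coef hz (p := z^1 * x * x + z^2 * y * y + z^4 * w * w - z^12 * x)
    (q := z^1 * x * y + z^2 * y * w + z^4 * w * x - z^18 * y)
    (r := z^1 * x * w + z^2 * y * x + z^4 * w * y - z^30 * w) hv0 hv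
    (by linear_combination (norm := module) r1)
  obtain ⟨-, e11, e12⟩ := coef hz (p := z^1 * y * x + z^2 * w * y + z^4 * x * w - z^18 * y)
    (q := z^1 * y * y + z^2 * w * w + z^4 * x * x - z^24 * w)
    (r := z^1 * y * w + z^2 * w * x + z^4 * x * y - z^36 * x) hv0 hv
    (by linear_combination (norm := module) r2)
  obtain ⟨-, -, e22⟩ := coef hz (p := z^1 * w * x + z^2 * x * y + z^4 * y * w - z^30 * w)
    (q := z^1 * w * y + z^2 * x * w + z^4 * y * x - z^36 * x)
    (r := z^1 * w * w + z^2 * x * x + z^4 * y * y - z^48 * y) hv0 hv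
    (by linear_combination (norm := module) r4)
  have red : ∀ n : ℕ, z ^ n = z ^ (n % 7) := fun n => pow_eq_pow_mod _ h7
  rw [red 12] at e00
  rw [red 18] at e01
  rw [red 30] at e02
  rw [red 24] at e11
  rw [red 36] at e12
  rw [red 48] at e22
  refine scalars hz e00 e01 e02 e11 e12 e22 pl ?_
  rintro ⟨rfl, rfl, rfl⟩
  have : ρ sGen (ρ sGen (ρ sGen (ρ sGen v))) = v := by
    have := ap ρ (show sGen * sGen * sGen * sGen = 1 by decide) v
    simpa only [map_mul, Module.End.mul_apply, map_one, Module.End.one_apply] using this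
  rw [hS] at this
  simp at this
  exact hv0 this.symm

lemma iso_of_cubic [FiniteDimensional ℂ W] {z : ℂ} (hz : IsPrimitiveRoot z 7)
    (hirr : IsIrreducibleRep ρ) (hc : Cubic ρ z) {v0 : W} (hv00 : v0 ≠ 0)
    (hv0 : ρ (tGen 7) v0 = z • v0) : RepIso ρ (rep hz) := by
  obtain ⟨P, hP, hd⟩ := decomp hz hc
  haveI := hirr.1
  -- the central element acts by a scalar
  obtain ⟨ε, hε⟩ := Module.End.exists_eigenvalue (ρ (sGen * sGen))
  have hεall : ∀ u, ρ sGen (ρ sGen u) = ε • u := by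
    have : Module.End.eigenspace (ρ (sGen * sGen)) ε = ⊤ := by
      refine (hirr.2 _ fun g => ?_).resolve_left hε
      rintro _ ⟨u, hu, rfl⟩
      rw [SetLike.mem_coe, Module.End.mem_eigenspace_iff] at hu
      rw [Module.End.mem_eigenspace_iff]
      have hcomm : sGen * sGen * g = g * (sGen * sGen) := by
        have hss : (sGen * sGen).1 = -1 := by decide
        apply Subtype.ext
        rw [Matrix.SpecialLinearGroup.coe_mul, Matrix.SpecialLinearGroup.coe_mul g, hss]
        simp
      have := ap ρ hcomm u
      rw [map_mul, map_mul ρ g, Module.End.mul_apply, Module.End.mul_apply, hu, map_smul] at this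
      exact this
    intro u
    have hu : u ∈ Module.End.eigenspace (ρ (sGen * sGen)) ε := by rw [this]; trivial
    rw [Module.End.mem_eigenspace_iff, map_mul, Module.End.mul_apply] at hu
    exact hu
  -- an eigenvector of `P S` on the `z`-eigenspace
  let E := Module.End.eigenspace (ρ (tGen 7)) z
  have hmaps : ∀ u ∈ E, (P ∘ₗ ρ sGen) u ∈ E := fun u _ =>
    Module.End.mem_eigenspace_iff.2 (hP _)
  haveI : Nontrivial E :=
    ⟨⟨⟨v0, Module.End.mem_eigenspace_iff.2 hv0⟩, 0, fun h => hv00 (congrArg Subtype.val h)⟩⟩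
  obtain ⟨x, hx⟩ := Module.End.exists_eigenvalue ((P ∘ₗ ρ sGen).restrict hmaps)
  obtain ⟨⟨v, hvE⟩, hv1⟩ := hx.exists_hasEigenvector
  have hvx : P (ρ sGen v) = x • v := congrArg Subtype.val hv1.apply_eq_smul
  have hvne : v ≠ 0 := fun h => hv1.2 (Subtype.ext h)
  have hv : ρ (tGen 7) v = z • v := Module.End.mem_eigenspace_iff.1 hvE
  obtain ⟨u2, u4, h2, h4, e⟩ := hd (ρ sGen v)
  rw [hvx] at e
  obtain ⟨y, w, pl, hS⟩ := key_step hz hc hvne hv (hεall v) h2 h4 e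
  obtain ⟨rfl, rfl, rfl⟩ := sg_determined hz hvne hv pl hS
  have e2 := eig_H hv
  have e4 := eig_H e2
  have s2 : ρ sGen (ρ hGen v) = sg z 1 • v + sg z 2 • ρ hGen v
      + sg z 0 • ρ hGen (ρ hGen v) := by
    rw [act_SH, hS]
    simp only [map_add, map_smul, act_H3]
    abel
  have s4 : ρ sGen (ρ hGen (ρ hGen v)) = sg z 2 • v + sg z 0 • ρ hGen v
      + sg z 1 • ρ hGen (ρ hGen v) := by
    rw [act_SH, s2]
    simp only [map_add, map_smul, act_H3]
    abel
  let f : (Fin 3 → ℂ) →ₗ[ℂ] W :=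
    { toFun := fun u => u 0 • v + u 1 • ρ hGen v + u 2 • ρ hGen (ρ hGen v)
      map_add' := fun a b => by simp only [Pi.add_apply]; module
      map_smul' := fun a b => by simp only [Pi.smul_apply, smul_eq_mul, RingHom.id_apply]; module }
  have hf : ∀ u, f u = u 0 • v + u 1 • ρ hGen v + u 2 • ρ hGen (ρ hGen v) := fun _ => rfl
  have int : ∀ (g : SL2 7) u, f (rep hz g u) = ρ g (f u) := by
    intro g
    induction g using gen_induction with
    | h1 => intro u; simp
    | hs g ih =>
      intro u
      rw [map_mul, map_mul, Module.End.mul_apply, Module.End.mul_apply, ih]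
      congr 1
      rw [rep_s, hf, hf]
      simp only [map_add, map_smul, hS, s2, s4]
      simp
      module
    | ht g ih =>
      intro u
      rw [map_mul, map_mul, Module.End.mul_apply, Module.End.mul_apply, ih]
      congr 1
      rw [rep_t, hf, hf]
      simp only [map_add, map_smul, hv, e2, e4]
      simp
      module
  have hf0 : f (Pi.single 0 1) = v := by rw [hf]; simp
  have hker : LinearMap.ker f = ⊥ := by
    refine ((rep_irr hz).2 _ fun g => ?_).resolve_right fun h => ?_
    · rintro _ ⟨u, hu, rfl⟩
      have hu' : f u = 0 := hu
      rw [LinearMap.mem_ker, int, hu', map_zero]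
    · rw [LinearMap.ker_eq_top] at h
      rw [h] at hf0
      exact hvne hf0.symm
  have hran : LinearMap.range f = ⊤ := by
    refine (hirr.2 _ fun g => ?_).resolve_left fun h => ?_
    · rintro _ ⟨_, ⟨u, rfl⟩, rfl⟩
      exact ⟨rep hz g u, int g u⟩
    · rw [LinearMap.range_eq_bot] at h
      rw [h] at hf0
      exact hvne hf0.symm
  let e' := LinearEquiv.ofBijective f ⟨LinearMap.ker_eq_bot.1 hker, LinearMap.range_eq_top.1 hran⟩
  refine ⟨e'.symm, fun g u => ?_⟩
  rw [LinearEquiv.symm_apply_eq]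
  have : e' (rep hz g (e'.symm u)) = ρ g (e' (e'.symm u)) := int g _
  rw [this, LinearEquiv.apply_symm_apply]

end Classify


lemma aeval_isUnit {W : Type} [AddCommGroup W] [Module ℂ W] (T : Module.End ℂ W)
    (s : Finset ℂ) (h : ∀ c ∈ s, c ∉ spectrum ℂ T) :
    IsUnit (Polynomial.aeval T (∏ c ∈ s, (Polynomial.X - Polynomial.C c))) := by
  classical
  induction s using Finset.induction_on with
  | empty => simp
  | insert a s ha ih =>
    rw [Finset.prod_insert ha, map_mul]
    refine IsUnit.mul ?_ (ih fun c hc => h c (Finset.mem_insert_of_mem hc))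
    have h1 := h a (Finset.mem_insert_self a s)
    rw [spectrum.notMem_iff] at h1
    have h2 := h1.neg
    simpa using h2

lemma aeval_zero {W : Type} [AddCommGroup W] [Module ℂ W] (T : Module.End ℂ W)
    (hT : T ^ 7 = 1) (s : Finset ℂ) (hs : s ⊆ Polynomial.nthRootsFinset 7 (1 : ℂ))
    (h : ∀ c ∈ Polynomial.nthRootsFinset 7 (1 : ℂ), c ∈ spectrum ℂ T → c ∈ s) :
    Polynomial.aeval T (∏ c ∈ s, (Polynomial.X - Polynomial.C c)) = 0 := by
  classical
  have h1 := Polynomial.X_pow_sub_one_eq_prod (by norm_num : 0 < 7)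
    (Complex.isPrimitiveRoot_exp 7 (by norm_num))
  rw [← Finset.prod_sdiff hs] at h1
  have h2 := congrArg (Polynomial.aeval T) h1
  rw [map_mul] at h2
  simp only [map_sub, map_pow, Polynomial.aeval_X, map_one, hT, sub_self] at h2
  have hu := aeval_isUnit T (Polynomial.nthRootsFinset 7 (1 : ℂ) \ s) (by
    intro c hc hc'
    rw [Finset.mem_sdiff] at hc
    exact hc.2 (h c hc.1 hc'))
  exact (hu.mul_right_eq_zero).1 h2.symm

lemma tGen_pow : (tGen 7) ^ 7 = 1 := by
  decide

section classify
variable {W : Type} [AddCommGroup W] [Module ℂ W] [FiniteDimensional ℂ W]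
  (ρ : Representation ℂ (SL2 7) W)

lemma rho_pow : (ρ (tGen 7)) ^ 7 = 1 := by
  rw [← map_pow, tGen_pow, map_one]

lemma spec_vec {μ : ℂ} : μ ∈ spectrum ℂ (ρ (tGen 7)) ↔
    ∃ v, v ≠ 0 ∧ ρ (tGen 7) v = μ • v := by
  constructor
  · intro h
    rw [← Module.End.hasEigenvalue_iff_mem_spectrum] at h
    obtain ⟨v, hv⟩ := h.exists_hasEigenvector
    exact ⟨v, hv.2, hv.apply_eq_smul⟩
  · rintro ⟨v, hv, h⟩
    rw [← Module.End.hasEigenvalue_iff_mem_spectrum]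
    exact Module.End.hasEigenvalue_of_hasEigenvector
      (x := v) ⟨Module.End.mem_eigenspace_iff.2 h, hv⟩

lemma rho_inj (g : SL2 7) {v : W} (hv : v ≠ 0) : ρ g v ≠ 0 := by
  intro h
  apply hv
  have h1 : ρ g⁻¹ (ρ g v) = v := by simp
  rw [← h1, h, map_zero]

lemma spec_sq {μ : ℂ} (h : μ ∈ spectrum ℂ (ρ (tGen 7))) :
    μ ^ 2 ∈ spectrum ℂ (ρ (tGen 7)) := by
  rw [spec_vec] at h ⊢
  obtain ⟨v, hv, h⟩ := h
  exact ⟨ρ hGen v, rho_inj ρ _ hv, eig_H h⟩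

lemma triv_of_T (hT : ρ (tGen 7) = 1) : ∀ g, ρ g = LinearMap.id := by
  have h6 : ρ (tGen 7 ^ 6) = 1 := by rw [map_pow, hT, one_pow]
  have hS : ∀ v, ρ sGen v = v := by
    intro v
    have h1 := act_1 ρ v
    rw [hT, h6] at h1
    simp only [Module.End.one_apply] at h1
    by_contra hne
    apply rho_inj ρ sGen (sub_ne_zero.2 hne)
    rw [map_sub, h1, sub_self]
  apply gen_induction
  · simp; rfl
  · intro g hg
    ext v
    rw [map_mul, Module.End.mul_apply, hS, hg]
  · intro g hg
    rw [map_mul, hT, hg]; rfl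

lemma iso_of_mem (hirr : IsIrreducibleRep ρ)
    (hcard : (spectrum ℂ (ρ (tGen 7))).ncard ≤ 3) {z : ℂ} (hz : IsPrimitiveRoot z 7)
    (h1 : z ∈ spectrum ℂ (ρ (tGen 7))) : RepIso ρ (rep hz) := by
  classical
  have h2 := spec_sq ρ h1
  have h4 : z ^ 4 ∈ spectrum ℂ (ρ (tGen 7)) := by
    have := spec_sq ρ h2
    rwa [← pow_mul] at this
  have n12 : z ≠ z ^ 2 := by simpa using prim_ne hz (i := 1) (j := 2) (by norm_num) (by norm_num) (by norm_num)
  have n14 : z ≠ z ^ 4 := by simpa using prim_ne hz (i := 1) (j := 4) (by norm_num) (by norm_num) (by norm_num)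
  have n24 : z ^ 2 ≠ z ^ 4 := prim_ne hz (by norm_num) (by norm_num) (by norm_num)
  set s : Finset ℂ := {z, z ^ 2, z ^ 4} with hs
  have hsc : s.card = 3 := by
    rw [hs, Finset.card_insert_of_notMem (by simp [n12, n14]),
      Finset.card_insert_of_notMem (by simp [n24]), Finset.card_singleton]
  have hsub : (s : Set ℂ) ⊆ spectrum ℂ (ρ (tGen 7)) := by
    intro c hc
    simp only [hs, Finset.coe_insert, Finset.coe_singleton, Set.mem_insert_iff,
      Set.mem_singleton_iff] at hc
    rcases hc with rfl | rfl | rfl <;> assumption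
  have hfin : (spectrum ℂ (ρ (tGen 7))).Finite := Module.End.finite_spectrum _
  have heq : (s : Set ℂ) = spectrum ℂ (ρ (tGen 7)) :=
    Set.eq_of_subset_of_ncard_le hsub (by rw [Set.ncard_coe_finset, hsc]; exact hcard) hfin
  have hz7 := hz.pow_eq_one
  have h0 := aeval_zero (ρ (tGen 7)) (rho_pow ρ) s (by
    intro c hc
    rw [Polynomial.mem_nthRootsFinset (by norm_num)]
    simp only [hs, Finset.mem_insert, Finset.mem_singleton] at hc
    rcases hc with rfl | rfl | rfl
    · exact hz7
    · rw [← pow_mul, mul_comm, pow_mul, hz7, one_pow]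
    · rw [← pow_mul, mul_comm, pow_mul, hz7, one_pow]) (by
    intro c _ hc
    rw [← heq] at hc
    exact hc)
  rw [hs, Finset.prod_insert (by simp [n12, n14]), Finset.prod_insert (by simp [n24]),
    Finset.prod_singleton] at h0
  have hc : Cubic ρ z := by
    intro u
    have h5 := congrArg (fun f : Module.End ℂ W => f u) h0
    simp only [map_mul, map_sub, Polynomial.aeval_X, Polynomial.aeval_C, Module.End.mul_apply,
      LinearMap.sub_apply, Module.algebraMap_end_apply, map_smul, LinearMap.zero_apply] at h5
    rw [← sub_eq_zero, ← h5]
    module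
  obtain ⟨v, hv, hv'⟩ := (spec_vec ρ).1 h1
  exact iso_of_cubic hz hirr hc hv hv'

lemma exists_eig (hn : IsNontrivialRep ρ) :
    ∃ c : ℂ, c ^ 7 = 1 ∧ c ≠ 1 ∧ c ∈ spectrum ℂ (ρ (tGen 7)) := by
  by_contra! hno
  have h0 := aeval_zero (ρ (tGen 7)) (rho_pow ρ) {1} (by
    intro c hc
    rw [Finset.mem_singleton] at hc
    rw [Polynomial.mem_nthRootsFinset (by norm_num), hc, one_pow]) (by
    intro c hc hc'
    rw [Polynomial.mem_nthRootsFinset (by norm_num)] at hc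
    by_contra h
    exact hno c hc (by simpa using h) hc')
  rw [Finset.prod_singleton] at h0
  simp only [map_sub, Polynomial.aeval_X, map_one] at h0
  obtain ⟨g, hg⟩ := hn
  exact hg (triv_of_T ρ (sub_eq_zero.1 h0) g)

end classify

lemma zeta_prim : IsPrimitiveRoot (ζ 7) 7 := Complex.isPrimitiveRoot_exp 7 (by norm_num)

lemma zeta3_prim : IsPrimitiveRoot (ζ 7 ^ 3) 7 :=
  zeta_prim.pow_of_coprime 3 (by norm_num)

lemma red7 {z : ℂ} (hz : z ^ 7 = 1) (n : ℕ) : z ^ n = z ^ (n % 7) := by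
  conv_lhs => rw [← Nat.div_add_mod n 7, pow_add, pow_mul, hz, one_pow, one_mul]

lemma spec_two : spectrum ℂ (rep zeta3_prim (tGen 7)) = {ζ 7 ^ 3, ζ 7 ^ 5, ζ 7 ^ 6} := by
  rw [rep_spec, ← pow_mul, ← pow_mul, red7 zeta_prim.pow_eq_one (3 * 4)]
  norm_num
  rw [Set.pair_comm]

lemma not_iso : ¬ RepIso (rep zeta_prim) (rep zeta3_prim) := by
  rintro ⟨e, he⟩
  have h1 : ζ 7 ∈ spectrum ℂ (rep zeta_prim (tGen 7)) := by
    rw [rep_spec]; simp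
  obtain ⟨v, hv, hv'⟩ := (spec_vec _).1 h1
  have h2 : ζ 7 ∈ spectrum ℂ (rep zeta3_prim (tGen 7)) := by
    refine (spec_vec _).2 ⟨e v, by simpa using hv, ?_⟩
    rw [← he, hv', map_smul]
  rw [spec_two] at h2
  simp only [Set.mem_insert_iff, Set.mem_singleton_iff] at h2
  have hne : ∀ j, j < 7 → 1 ≠ j → ζ 7 ≠ ζ 7 ^ j := by
    intro j hj hj'
    simpa using prim_ne zeta_prim (i := 1) (j := j) (by norm_num) hj hj'
  rcases h2 with h | h | h
  · exact hne 3 (by norm_num) (by norm_num) h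
  · exact hne 5 (by norm_num) (by norm_num) h
  · exact hne 6 (by norm_num) (by norm_num) h

lemma classify {W : Type} [AddCommGroup W] [Module ℂ W] [FiniteDimensional ℂ W]
    (ρ : Representation ℂ (SL2 7) W) (hirr : IsIrreducibleRep ρ) (hn : IsNontrivialRep ρ)
    (hcard : (spectrum ℂ (ρ (tGen 7))).ncard ≤ 3) :
    RepIso ρ (rep zeta_prim) ∨ RepIso ρ (rep zeta3_prim) := by
  obtain ⟨c, hc7, hc1, hc⟩ := exists_eig ρ hn
  obtain ⟨k, hk, rfl⟩ := zeta_prim.eq_pow_of_pow_eq_one hc7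
  have hc2 := spec_sq ρ hc
  have hc4 := spec_sq ρ hc2
  rw [← pow_mul, red7 zeta_prim.pow_eq_one] at hc2
  rw [← pow_mul, ← pow_mul, red7 zeta_prim.pow_eq_one] at hc4
  have A : ζ 7 ^ 1 ∈ spectrum ℂ (ρ (tGen 7)) → RepIso ρ (rep zeta_prim) := fun h =>
    iso_of_mem ρ hirr hcard zeta_prim (by simpa using h)
  have B : ζ 7 ^ 3 ∈ spectrum ℂ (ρ (tGen 7)) → RepIso ρ (rep zeta3_prim) :=
    iso_of_mem ρ hirr hcard zeta3_prim
  interval_cases k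
  · exact absurd (pow_zero _) hc1
  · exact Or.inl (A hc)
  · exact Or.inl (A hc4)
  · exact Or.inr (B hc)
  · exact Or.inl (A hc2)
  · exact Or.inr (B hc2)
  · exact Or.inr (B hc4)

end KleinRep

/-- Up to isomorphism, `SL(2, ℤ/7ℤ)` has exactly two nontrivial irreducible
finite-dimensional complex representations `ρ` for which `ρ(t)` has at most three distinct
eigenvalues; both are three-dimensional, with `t`-spectra `{ζ₇, ζ₇², ζ₇⁴}` and
`{ζ₇³, ζ₇⁵, ζ₇⁶}` respectively. -/
theorem stmt8 :
    ∃ (ρ₁ ρ₂ : Representation ℂ (SL2 7) (Fin 3 → ℂ)),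
      (IsIrreducibleRep ρ₁ ∧ IsNontrivialRep ρ₁ ∧
        spectrum ℂ (ρ₁ (tGen 7)) = {ζ 7, ζ 7 ^ 2, ζ 7 ^ 4}) ∧
      (IsIrreducibleRep ρ₂ ∧ IsNontrivialRep ρ₂ ∧
        spectrum ℂ (ρ₂ (tGen 7)) = {ζ 7 ^ 3, ζ 7 ^ 5, ζ 7 ^ 6}) ∧
      ¬ RepIso ρ₁ ρ₂ ∧
      (∀ (W : Type) [AddCommGroup W] [Module ℂ W] [FiniteDimensional ℂ W]
        (ρ : Representation ℂ (SL2 7) W),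
        IsIrreducibleRep ρ → IsNontrivialRep ρ →
        (spectrum ℂ (ρ (tGen 7))).ncard ≤ 3 →
        RepIso ρ ρ₁ ∨ RepIso ρ ρ₂) := by
  exact ⟨KleinRep.rep KleinRep.zeta_prim, KleinRep.rep KleinRep.zeta3_prim,
    ⟨KleinRep.rep_irr _, KleinRep.rep_nontriv _, KleinRep.rep_spec _⟩,
    ⟨KleinRep.rep_irr _, KleinRep.rep_nontriv _, KleinRep.spec_two⟩,
    KleinRep.not_iso,
    fun W _ _ _ ρ hirr hn hcard => KleinRep.classify ρ hirr hn hcard⟩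
end

section
/- Let ρ be an irreducible finite-dimensional complex representation of SL(2, ℤ/8ℤ) that does not factor through the reduction homomorphism SL(2, ℤ/8ℤ) → SL(2, ℤ/4ℤ). If ρ(t) has exactly two distinct eigenvalues, then ρ is two-dimensional and the eigenvalue set of ρ(t) is one of {ζ₈, ζ₈³}, {ζ₈, ζ₈⁷}, {ζ₈³, ζ₈⁵}, {ζ₈⁵, ζ₈⁷}. -/
/-- The lower unipotent `[[1,0],[-1,1]]`. -/
def uGen : SL2 8 := ⟨!![1, 0; -1, 1], by simp [Matrix.det_fin_two_of]⟩

/-- The element `[[0,1],[-1,0]]`. -/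
def sGen : SL2 8 := ⟨!![0, 1; -1, 0], by simp [Matrix.det_fin_two_of]⟩

lemma tGen_pow (n : ℕ) : ((tGen 8 ^ n : SL2 8) : Matrix (Fin 2) (Fin 2) (ZMod 8)) =
    !![1, (n : ZMod 8); 0, 1] := by
  induction n with
  | zero => ext i j; fin_cases i <;> fin_cases j <;> simp
  | succ k ih =>
    rw [pow_succ, Matrix.SpecialLinearGroup.coe_mul, ih]
    ext i j; fin_cases i <;> fin_cases j <;> simp [tGen, Matrix.mul_apply, Fin.sum_univ_two, add_comm]

lemma uGen_pow (n : ℕ) : ((uGen ^ n : SL2 8) : Matrix (Fin 2) (Fin 2) (ZMod 8)) =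
    !![1, 0; -(n : ZMod 8), 1] := by
  induction n with
  | zero => ext i j; fin_cases i <;> fin_cases j <;> simp
  | succ k ih =>
    rw [pow_succ, Matrix.SpecialLinearGroup.coe_mul, ih]
    ext i j; fin_cases i <;> fin_cases j <;> simp [uGen, Matrix.mul_apply, Fin.sum_univ_two, add_comm]

lemma braid_rel : tGen 8 * uGen * tGen 8 = uGen * tGen 8 * uGen := by
  decide

lemma s_eq : tGen 8 * uGen * tGen 8 = sGen := by
  decide

lemma u_conj : uGen = sGen * tGen 8 * sGen⁻¹ := by
  rw [eq_mul_inv_iff_mul_eq]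
  decide

lemma s_sq_val : ((sGen * sGen : SL2 8) : Matrix (Fin 2) (Fin 2) (ZMod 8)) = -1 := by
  decide

lemma s_sq_central (g : SL2 8) : g * (sGen * sGen) = sGen * sGen * g := by
  apply Subtype.ext
  rw [Matrix.SpecialLinearGroup.coe_mul, Matrix.SpecialLinearGroup.coe_mul _ g, s_sq_val]
  simp

lemma s_four : (sGen * sGen) * (sGen * sGen) = 1 := by
  decide

lemma t_pow_eight : tGen 8 ^ 8 = 1 := by
  apply Subtype.ext
  rw [tGen_pow]
  decide

lemma zmod8_dich (x : ZMod 8) : x * x = 1 ∨ 4 * x = 0 := by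
  revert x; decide

lemma mem_gen_of_unit (H : Submonoid (SL2 8)) (ht : tGen 8 ∈ H) (hu : uGen ∈ H)
    (g : SL2 8) (hc : g 1 0 * g 1 0 = 1) : g ∈ H := by
  have hdet : g 0 0 * g 1 1 - g 0 1 * g 1 0 = 1 := by
    have := g.det_coe; rwa [Matrix.det_fin_two] at this
  have : g = tGen 8 ^ ((g 0 0 - 1) * g 1 0).val * uGen ^ (- g 1 0).val *
      tGen 8 ^ ((g 1 1 - 1) * g 1 0).val := by
    apply Subtype.ext
    rw [Matrix.SpecialLinearGroup.coe_mul, Matrix.SpecialLinearGroup.coe_mul, tGen_pow, uGen_pow,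
      tGen_pow]
    simp only [ZMod.natCast_val, ZMod.cast_id', id_eq]
    ext i j; fin_cases i <;> fin_cases j <;> simp [Matrix.mul_apply, Fin.sum_univ_two]
    · linear_combination (1 - g 0 0) * hc
    · linear_combination (-g 0 1 - (g 0 0 - 1) * (g 1 1 -1 ) * g 1 0) * hc - g 1 0 * hdet
    · linear_combination (1 - g 1 1) * hc
  rw [this]
  exact H.mul_mem (H.mul_mem (H.pow_mem ht _) (H.pow_mem hu _)) (H.pow_mem ht _)

lemma mem_gen (H : Submonoid (SL2 8)) (ht : tGen 8 ∈ H) (hu : uGen ∈ H) (g : SL2 8) : g ∈ H := by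
  rcases zmod8_dich (g 1 0) with h | h
  · exact mem_gen_of_unit H ht hu g h
  rcases zmod8_dich (g 1 0 - g 0 0) with h' | h'
  · have h1 : uGen * g ∈ H := by
      apply mem_gen_of_unit H ht hu
      have : (uGen * g) 1 0 = g 1 0 - g 0 0 := by
        rw [Matrix.SpecialLinearGroup.coe_mul, Matrix.mul_apply, Fin.sum_univ_two]
        have e1 : uGen 1 0 = -1 := rfl
        have e2 : uGen 1 1 = 1 := rfl
        rw [e1, e2]; ring
      rw [this, h']
    have h2 : g = uGen ^ 7 * (uGen * g) := by
      have : uGen ^ 8 = 1 := by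
        apply Subtype.ext
        rw [uGen_pow]
        decide
      rw [← mul_assoc, ← pow_succ, this, one_mul]
    rw [h2]
    exact H.mul_mem (H.pow_mem hu _) h1
  · exfalso
    have hdet : g 0 0 * g 1 1 - g 0 1 * g 1 0 = 1 := by
      have := g.det_coe; rwa [Matrix.det_fin_two] at this
    have : (4 : ZMod 8) = 0 := by
      linear_combination (-4) * hdet + (g 1 1 - g 0 1) * h - g 1 1 * h'
    exact absurd this (by decide)

/-- The reduction map. -/
def redMap : SL2 8 →* SL2 4 := Matrix.SpecialLinearGroup.map
        (ZMod.castHom (by norm_num : (4:ℕ) ∣ 8) (ZMod 4))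

lemma redMap_apply (g : SL2 8) (i j : Fin 2) :
    redMap g i j = ZMod.castHom (by norm_num : (4:ℕ) ∣ 8) (ZMod 4) (g i j) := rfl

lemma redMap_surj : Function.Surjective redMap := by
  intro g
  have hdet : g 0 0 * g 1 1 - g 0 1 * g 1 0 = 1 := by
    have := g.det_coe; rwa [Matrix.det_fin_two] at this
  have key : ∀ D : ZMod 8, ZMod.castHom (by norm_num : (4:ℕ) ∣ 8) (ZMod 4) D = 1 → D * D = 1 := by
    decide
  have lft : ∀ x : ZMod 4, ZMod.castHom (by norm_num : (4:ℕ) ∣ 8) (ZMod 4) (x.val : ZMod 8) = x := by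
    decide
  set f := ZMod.castHom (by norm_num : (4:ℕ) ∣ 8) (ZMod 4) with hf
  set a : ZMod 8 := ((g 0 0).val : ZMod 8) with ha
  set b : ZMod 8 := ((g 0 1).val : ZMod 8) with hb
  set c : ZMod 8 := ((g 1 0).val : ZMod 8) with hc
  set d : ZMod 8 := ((g 1 1).val : ZMod 8) with hd
  have fa : f a = g 0 0 := lft _
  have fb : f b = g 0 1 := lft _
  have fc : f c = g 1 0 := lft _
  have fd : f d = g 1 1 := lft _
  have hD : f (a * d - b * c) = 1 := by
    rw [map_sub, map_mul, map_mul, fa, fb, fc, fd, hdet]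
  have hDD := key _ hD
  refine ⟨⟨!![(a * d - b * c) * a, (a * d - b * c) * b; c, d], ?_⟩, ?_⟩
  · rw [Matrix.det_fin_two_of]; linear_combination hDD
  · ext i j
    fin_cases i <;> fin_cases j
    · change f ((a * d - b * c) * a) = g 0 0
      rw [map_mul, hD, one_mul, fa]
    · change f ((a * d - b * c) * b) = g 0 1
      rw [map_mul, hD, one_mul, fb]
    · exact fc
    · exact fd

lemma redMap_ker (N : Subgroup (SL2 8)) [hN : N.Normal] (ht : tGen 8 ^ 4 ∈ N) (g : SL2 8)
    (hg : redMap g = 1) : g ∈ N := by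
  have hu : uGen ^ 4 ∈ N := by
    rw [u_conj, conj_pow]
    exact hN.conj_mem _ ht _
  have hw := hN.conj_mem _ ht uGen
  have hdet : g 0 0 * g 1 1 - g 0 1 * g 1 0 = 1 := by
    have := g.det_coe; rwa [Matrix.det_fin_two] at this
  have h5 : ∀ x : ZMod 8, ZMod.castHom (by norm_num : (4:ℕ) ∣ 8) (ZMod 4) x = 1 → x = 1 ∨ x = 5 := by
    decide
  have h4 : ∀ x : ZMod 8, ZMod.castHom (by norm_num : (4:ℕ) ∣ 8) (ZMod 4) x = 0 → x = 0 ∨ x = 4 := by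
    decide
  have e (i j : Fin 2) := congrArg (fun h : SL2 4 => h i j) hg
  have e00 := h5 _ (e 0 0)
  have e01 := h4 _ (e 0 1)
  have e10 := h4 _ (e 1 0)
  have e11 := h5 _ (e 1 1)
  have main : ∃ i j k : Fin 2, g = (tGen 8 ^ 4) ^ (i : ℕ) * (uGen ^ 4) ^ (j : ℕ) *
      (uGen * tGen 8 ^ 4 * uGen⁻¹) ^ (k : ℕ) := by
    have hg' : g.1 = !![g 0 0, g 0 1; g 1 0, g 1 1] := Matrix.eta_fin_two _
    generalize g 0 0 = a at *
    generalize g 0 1 = b at *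
    generalize g 1 0 = c at *
    generalize g 1 1 = d at *
    suffices hm : ∃ i j k : Fin 2, !![a, b; c, d] = (((tGen 8 ^ 4) ^ (i : ℕ) *
        (uGen ^ 4) ^ (j : ℕ) * (uGen * tGen 8 ^ 4 * uGen⁻¹) ^ (k : ℕ) : SL2 8) :
          Matrix (Fin 2) (Fin 2) (ZMod 8)) by
      obtain ⟨i, j, k, h⟩ := hm
      exact ⟨i, j, k, Subtype.ext (hg'.trans h)⟩
    clear hg' e hg
    rcases e00 with rfl | rfl <;> rcases e01 with rfl | rfl <;> rcases e10 with rfl | rfl <;>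
      rcases e11 with rfl | rfl <;> first | (exact absurd hdet (by decide)) | decide
  obtain ⟨i, j, k, h⟩ := main
  rw [h]
  exact N.mul_mem (N.mul_mem (N.pow_mem ht _) (N.pow_mem hu _)) (N.pow_mem hw _)

lemma factors_of_t4 {V : Type} [AddCommGroup V] [Module ℂ V]
    (ρ : Representation ℂ (SL2 8) V) (h : ρ (tGen 8) ^ 4 = 1) :
    ∃ ρ' : Representation ℂ (SL2 4) V, ρ = ρ'.comp redMap := by
  have hk : ∀ x y, redMap x = redMap y → ρ x = ρ y := by
    intro x y hxy
    have : x * y⁻¹ ∈ MonoidHom.ker ρ := by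
      apply redMap_ker
      · rw [MonoidHom.mem_ker, map_pow, h]
      · rw [map_mul, hxy, ← map_mul, mul_inv_cancel, map_one]
    rw [MonoidHom.mem_ker] at this
    calc ρ x = ρ (x * y⁻¹ * y) := by rw [inv_mul_cancel_right]
      _ = ρ y := by rw [map_mul, this, one_mul]
  choose σ hσ using redMap_surj
  refine ⟨{ toFun := fun g => ρ (σ g), map_one' := ?_, map_mul' := ?_ }, ?_⟩
  · rw [← map_one ρ]; apply hk; rw [hσ, map_one]
  · intro x y
    rw [← map_mul ρ]; apply hk; rw [map_mul, hσ, hσ, hσ]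
  · apply MonoidHom.ext
    intro x
    apply hk
    rw [hσ]

lemma mat_det (A B : Matrix (Fin 2) (Fin 2) ℂ) (c : ℂ) (hc : c ≠ 0) (hb : A * B * A = B * A * B)
    (hsq : (A * B * A) * (A * B * A) = c • 1) (hd : A.det = B.det) (hne : A ≠ B) :
    A.det ^ 3 = -c := by
  have hdet : (A * B * A).det = A.det ^ 3 := by
    rw [Matrix.det_mul, Matrix.det_mul, ← hd]; ring
  have hBC : B * (A * B * A) = (A * B * A) * A := by
    rw [← mul_assoc, ← mul_assoc, ← hb]
  rw [← hdet]
  generalize A * B * A = C at *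
  have e (i j : Fin 2) := congrFun (congrFun hsq i) j
  have e00 := e 0 0
  have e01 := e 0 1
  have e10 := e 1 0
  have e11 := e 1 1
  simp [Matrix.mul_apply, Fin.sum_univ_two] at e00 e01 e10 e11
  rw [Matrix.det_fin_two]
  by_cases htr : C 0 0 + C 1 1 = 0
  · linear_combination (-1 : ℂ) * e00 + C 0 0 * htr
  · exfalso
    have h01 : C 0 1 = 0 := by
      apply (mul_eq_zero.mp (?_ : (C 0 0 + C 1 1) * C 0 1 = 0)).resolve_left htr
      linear_combination e01
    have h10 : C 1 0 = 0 := by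
      apply (mul_eq_zero.mp (?_ : (C 0 0 + C 1 1) * C 1 0 = 0)).resolve_left htr
      linear_combination e10
    have hdd : C 0 0 = C 1 1 := by
      apply sub_eq_zero.mp
      apply (mul_eq_zero.mp (?_ : (C 0 0 + C 1 1) * (C 0 0 - C 1 1) = 0)).resolve_left htr
      linear_combination e00 - e11
    have hk : C 1 1 ≠ 0 := by
      intro h0
      apply hc
      rw [← e11, h0, h01]; ring
    have hC : C = C 1 1 • 1 := by
      ext i j; fin_cases i <;> fin_cases j <;> simp [h01, h10, hdd]
    rw [hC] at hBC
    simp only [mul_smul_comm, smul_mul_assoc, mul_one, one_mul] at hBC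
    exact hne (smul_right_injective _ hk hBC).symm

/-- Any `A` annihilated by `X^n - 1` with spectrum `{a,b}` satisfies the quadratic relation. -/
lemma quad_rel {V : Type} [AddCommGroup V] [Module ℂ V] [FiniteDimensional ℂ V]
    (A : Module.End ℂ V) (a b : ℂ) (hab : a ≠ b) (ha : a ^ 8 = 1) (hb : b ^ 8 = 1)
    (hs : spectrum ℂ A = {a, b}) (hA : A ^ 8 = 1) :
    Polynomial.aeval A ((Polynomial.X - Polynomial.C a) * (Polynomial.X - Polynomial.C b)) = 0 := by
  open Polynomial in
  have hcop : IsCoprime (X - C a) (X - C b) := isCoprime_X_sub_C_of_isUnit_sub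
    (sub_ne_zero.mpr hab).isUnit
  obtain ⟨q, hq⟩ : (X - C a) * (X - C b) ∣ (X ^ 8 - 1 : ℂ[X]) := by
    apply hcop.mul_dvd <;> rw [dvd_iff_isRoot] <;> simp [ha, hb]
  have hder := congrArg derivative hq
  have hqa : q.eval a ≠ 0 := by
    intro h0
    have := congrArg (eval a) hder
    simp [h0] at this
    rcases this with h | h
    · norm_num at h
    · rw [h] at ha; norm_num at ha
  have hqb : q.eval b ≠ 0 := by
    intro h0
    have := congrArg (eval b) hder
    simp [h0] at this
    rcases this with h | h
    · norm_num at h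
    · rw [h] at hb; norm_num at hb
  have hu : IsUnit (aeval A q) := by
    rw [← spectrum.zero_notMem_iff ℂ, spectrum.map_polynomial_aeval_of_nonempty A q (by rw [hs]; simp), hs]
    rintro ⟨x, hx, hx0⟩
    rcases hx with rfl | rfl
    · exact hqa hx0
    · exact hqb hx0
  have h0 := congrArg (aeval A) hq
  rw [map_mul] at h0
  simp only [map_sub, map_pow, aeval_X, map_one, hA, sub_self] at h0
  have := hu.mul_left_eq_zero.mp h0.symm
  exact this

lemma zeta_pow4 : ζ 8 ^ 4 = -1 := by
  rw [ζ, ← Complex.exp_nat_mul, ← Complex.exp_pi_mul_I]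
  congr 1
  push_cast
  ring

lemma spec_list (a b : ℂ) (ha : a ^ 4 = -1) (hab : a * b = 1 ∨ a * b = -1) :
    ({a, b} : Set ℂ) = {ζ 8, ζ 8 ^ 3} ∨
       ({a, b} : Set ℂ) = {ζ 8, ζ 8 ^ 7} ∨
       ({a, b} : Set ℂ) = {ζ 8 ^ 3, ζ 8 ^ 5} ∨
       ({a, b} : Set ℂ) = {ζ 8 ^ 5, ζ 8 ^ 7} := by
  have hz := zeta_pow4
  generalize ζ 8 = z at *
  have ha0 : a ≠ 0 := by rintro rfl; norm_num at ha
  have hprod : (a - z) * (a - z ^ 3) * (a - z ^ 5) * (a - z ^ 7) = 0 := by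
    have h5 : z ^ 5 = -z := by linear_combination z * hz
    have h7 : z ^ 7 = - z ^ 3 := by linear_combination z ^ 3 * hz
    rw [h5, h7]
    linear_combination ha + (-a^2 * z^2 + z^4 - 1) * hz
  have hb : ∀ y, a * b = a * y → b = y := fun y h => mul_left_cancel₀ ha0 h
  simp only [mul_eq_zero, sub_eq_zero] at hprod
  rcases hprod with ((h | h) | h) | h <;> rcases hab with h1 | h1
  · have : b = z ^ 7 := hb _ (by rw [h1, h]; linear_combination (-z^4 + 1) * hz)
    rw [h, this]; simp
  · have : b = z ^ 3 := hb _ (by rw [h1, h]; linear_combination (-1) * hz)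
    rw [h, this]; simp
  · have : b = z ^ 5 := hb _ (by rw [h1, h]; linear_combination (-z^4 + 1) * hz)
    rw [h, this]; simp
  · have : b = z := hb _ (by rw [h1, h]; linear_combination (-1) * hz)
    rw [h, this, Set.pair_comm]; simp
  · have : b = z ^ 3 := hb _ (by rw [h1, h]; linear_combination (-z^4 + 1) * hz)
    rw [h, this, Set.pair_comm]; simp
  · have : b = z ^ 7 := hb _ (by rw [h1, h]; linear_combination (-z^8+z^4 - 1) * hz)
    rw [h, this]; simp
  · have : b = z := hb _ (by rw [h1, h]; linear_combination (-z^4 + 1) * hz)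
    rw [h, this, Set.pair_comm]; simp
  · have : b = z ^ 5 := hb _ (by rw [h1, h]; linear_combination (-z^8+z^4 - 1) * hz)
    rw [h, this, Set.pair_comm]; simp

lemma inv_of_gen {V : Type} [AddCommGroup V] [Module ℂ V] (ρ : Representation ℂ (SL2 8) V)
    (p : Submodule ℂ V) (ht : ∀ v ∈ p, ρ (tGen 8) v ∈ p) (hu : ∀ v ∈ p, ρ uGen v ∈ p)
    (g : SL2 8) : p.map (ρ g) ≤ p := by
  let H : Submonoid (SL2 8) :=
    { carrier := {g | ∀ v ∈ p, ρ g v ∈ p}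
      one_mem' := by intro v hv; simpa using hv
      mul_mem' := by
        intro x y hx hy v hv
        rw [map_mul]
        exact hx _ (hy _ hv) }
  have : g ∈ H := mem_gen H ht hu g
  rintro _ ⟨v, hv, rfl⟩
  exact this v hv

lemma central_scalar {V : Type} [AddCommGroup V] [Module ℂ V] (ρ : Representation ℂ (SL2 8) V)
    (hirr : IsIrreducibleRep ρ) :
    ∃ c : ℂ, (c = 1 ∨ c = -1) ∧ ρ (sGen * sGen) = c • 1 := by
  set Z := ρ (sGen * sGen) with hZ
  have hZZ : ∀ v, Z (Z v) = v := by
    intro v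
    have : Z * Z = 1 := by rw [hZ, ← map_mul, s_four, map_one]
    exact LinearMap.congr_fun this v
  rcases hirr.2 (LinearMap.ker (Z - 1)) (by
    rintro g _ ⟨v, hv, rfl⟩
    have hv' : Z v = v := by
      rw [SetLike.mem_coe, LinearMap.mem_ker] at hv
      exact sub_eq_zero.mp hv
    have hc : Z (ρ g v) = ρ g (Z v) := by
      have : Z * ρ g = ρ g * Z := by rw [hZ, ← map_mul, ← map_mul, s_sq_central]
      exact LinearMap.congr_fun this v
    rw [LinearMap.mem_ker]
    change Z (ρ g v) - ρ g v = 0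
    rw [hc, hv', sub_self]) with h | h
  · refine ⟨-1, Or.inr rfl, ?_⟩
    ext v
    have : Z v + v ∈ LinearMap.ker (Z - 1) := by
      rw [LinearMap.mem_ker]
      change Z (Z v + v) - (Z v + v) = 0
      rw [map_add, hZZ]; abel
    rw [h, Submodule.mem_bot] at this
    simpa using eq_neg_of_add_eq_zero_left this
  · refine ⟨1, Or.inl rfl, ?_⟩
    rw [LinearMap.ker_eq_top] at h
    rw [one_smul]; exact sub_eq_zero.mp h

lemma eq_one_or_neg_one_of_sq {x : ℂ} (h : x ^ 2 = 1) : x = 1 ∨ x = -1 :=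
  by simpa using h


/-- If `ρ` is an irreducible finite-dimensional complex representation of `SL(2, ℤ/8ℤ)`
that does not factor through `SL(2, ℤ/4ℤ)` and `ρ(t)` has exactly two distinct eigenvalues,
then `ρ` is two-dimensional with `t`-spectrum one of `{ζ₈, ζ₈³}`, `{ζ₈, ζ₈⁷}`,
`{ζ₈³, ζ₈⁵}`, `{ζ₈⁵, ζ₈⁷}`. -/
theorem stmt9
    (V : Type) [AddCommGroup V] [Module ℂ V] [FiniteDimensional ℂ V]
    (ρ : Representation ℂ (SL2 8) V)
    (hirr : IsIrreducibleRep ρ)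
    (hnf : ¬ ∃ ρ' : Representation ℂ (SL2 4) V,
      ρ = ρ'.comp (Matrix.SpecialLinearGroup.map
        (ZMod.castHom (by norm_num : (4:ℕ) ∣ 8) (ZMod 4))))
    (h2 : (spectrum ℂ (ρ (tGen 8))).ncard = 2) :
    Module.finrank ℂ V = 2 ∧
      (spectrum ℂ (ρ (tGen 8)) = {ζ 8, ζ 8 ^ 3} ∨
       spectrum ℂ (ρ (tGen 8)) = {ζ 8, ζ 8 ^ 7} ∨
       spectrum ℂ (ρ (tGen 8)) = {ζ 8 ^ 3, ζ 8 ^ 5} ∨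
       spectrum ℂ (ρ (tGen 8)) = {ζ 8 ^ 5, ζ 8 ^ 7}) := by
  obtain ⟨a, b, hab, hs⟩ := Set.ncard_eq_two.mp h2
  have hnt : Nontrivial V := hirr.1
  obtain ⟨c, hc1, hc⟩ := central_scalar ρ hirr
  set A : Module.End ℂ V := ρ (tGen 8) with hAdef
  set B : Module.End ℂ V := ρ uGen with hBdef
  set S : Module.End ℂ V := ρ sGen with hSdef
  set S' : Module.End ℂ V := ρ sGen⁻¹ with hSdef'
  have hA8 : A ^ 8 = 1 := by rw [hAdef, ← map_pow, t_pow_eight, map_one]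
  have hABA : A * B * A = S := by rw [hSdef, ← s_eq, map_mul, map_mul]
  have hBAB : B * A * B = S := by rw [hSdef, ← s_eq, braid_rel, map_mul, map_mul]
  have hS'S : S' * S = 1 := by rw [hSdef, hSdef', ← map_mul, inv_mul_cancel, map_one]
  have hSS' : S * S' = 1 := by rw [hSdef, hSdef', ← map_mul, mul_inv_cancel, map_one]
  have hB : B = S * A * S' := by
    rw [hBdef, u_conj, map_mul, map_mul]
  have hSS : S * S = c • 1 := by rw [← hc, map_mul]
  have heig : ∀ x ∈ spectrum ℂ A, ∃ v, v ≠ 0 ∧ A v = x • v := by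
    intro x hx
    obtain ⟨v, hv⟩ := (Module.End.hasEigenvalue_iff_mem_spectrum.mpr hx).exists_hasEigenvector
    exact ⟨v, hv.2, hv.apply_eq_smul⟩
  obtain ⟨va, hva0, hva⟩ := heig a (by rw [hs]; simp)
  obtain ⟨vb, hvb0, hvb⟩ := heig b (by rw [hs]; simp)
  have hpow : ∀ (x : ℂ) (v : V), v ≠ 0 → A v = x • v → x ^ 8 = 1 := by
    intro x v hv0 hv
    have h : ∀ n : ℕ, (A ^ n) v = x ^ n • v := by
      intro n
      induction n with
      | zero => simp
      | succ k ih => rw [pow_succ', Module.End.mul_apply, ih, map_smul, hv, smul_smul, pow_succ]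
    have h8 := h 8
    rw [hA8, Module.End.one_apply] at h8
    have : (x ^ 8 - 1) • v = 0 := by rw [sub_smul, ← h8, one_smul, sub_self]
    exact sub_eq_zero.mp ((smul_eq_zero.mp this).resolve_right hv0)
  have ha8 := hpow a va hva0 hva
  have hb8 := hpow b vb hvb0 hvb
  have hquad0 := quad_rel A a b hab ha8 hb8 hs hA8
  have hquad : A * A = (a + b) • A - (a * b) • 1 := by
    have h := hquad0
    simp only [map_mul, map_sub, Polynomial.aeval_X, Polynomial.aeval_C,
      Algebra.algebraMap_eq_smul_one] at h
    rw [← sub_eq_zero, ← h]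
    simp only [sub_mul, mul_sub, smul_mul_assoc, mul_smul_comm, one_mul, mul_one, add_smul, smul_sub, smul_smul,
      mul_comm b a]
    abel
  have hquadB : B * B = (a + b) • B - (a * b) • 1 := by
    have : B * B = S * (A * A) * S' := by
      rw [hB]
      calc S * A * S' * (S * A * S') = S * A * (S' * S) * A * S' := by simp only [mul_assoc]
        _ = _ := by rw [hS'S]; simp only [mul_assoc, one_mul]
    rw [this, hquad, hB]
    simp only [mul_sub, sub_mul, mul_smul_comm, smul_mul_assoc, mul_one, hSS']
  have hAinj : ∀ v, A v = 0 → v = 0 := by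
    intro v hv
    have : (A ^ 8) v = 0 := by rw [pow_succ, Module.End.mul_apply, hv, map_zero]
    rwa [hA8] at this
  have hBinj : ∀ v, B v = 0 → v = 0 := by
    intro v hv
    have h1 : S v = 0 := by
      rw [← hBAB, Module.End.mul_apply, hv, map_zero]
    have h3 : (S' * S) v = 0 := by rw [Module.End.mul_apply, h1, map_zero]
    rwa [hS'S] at h3
  have hle : Module.finrank ℂ V ≤ 2 := by
    obtain ⟨l, hl⟩ := Module.End.exists_eigenvalue (A * B)
    obtain ⟨v, hv⟩ := hl.exists_hasEigenvector
    have hv0 := hv.2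
    have hABv : A (B v) = l • v := hv.apply_eq_smul
    have hl0 : l ≠ 0 := by
      rintro rfl
      rw [zero_smul] at hABv
      exact hv0 (hBinj _ (hAinj _ hABv))
    have hAA : l • A v = ((a + b) * l) • v - (a * b) • B v := by
      have h := LinearMap.congr_fun hquad (B v)
      simp only [Module.End.mul_apply, LinearMap.sub_apply, LinearMap.smul_apply,
        Module.End.one_apply, hABv, map_smul, smul_smul] at h
      exact h
    have hAv : A v = l⁻¹ • (((a + b) * l) • v - (a * b) • B v) := by
      rw [← hAA, smul_smul, inv_mul_cancel₀ hl0, one_smul]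
    have hBBv : B (B v) = (a + b) • B v - (a * b) • v := LinearMap.congr_fun hquadB v
    set p := Submodule.span ℂ ({v, B v} : Set V) with hp
    have hvp : v ∈ p := Submodule.subset_span (by simp)
    have hBvp : B v ∈ p := Submodule.subset_span (by simp)
    have htp : ∀ w ∈ p, A w ∈ p := by
      change p ≤ p.comap A
      rw [hp, Submodule.span_le, ← hp]
      rintro _ (rfl | rfl)
      · change A _ ∈ p
        rw [hAv]
        exact p.smul_mem _ (p.sub_mem (p.smul_mem _ hvp) (p.smul_mem _ hBvp))
      · change A _ ∈ p
        rw [hABv]; exact p.smul_mem _ hvp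
    have hup : ∀ w ∈ p, B w ∈ p := by
      change p ≤ p.comap B
      rw [hp, Submodule.span_le, ← hp]
      rintro _ (rfl | rfl)
      · exact hBvp
      · change B _ ∈ p
        rw [hBBv]; exact p.sub_mem (p.smul_mem _ hBvp) (p.smul_mem _ hvp)
    have htop : p = ⊤ := by
      refine (hirr.2 p (inv_of_gen ρ p htp hup)).resolve_left ?_
      intro h
      rw [h, Submodule.mem_bot] at hvp
      exact hv0 hvp
    rw [← finrank_top, ← htop]
    classical
    have h1 := finrank_span_finset_le_card (R := ℂ) ({v, B v} : Finset V)
    have h3 : (({v, B v} : Finset V)).card ≤ 2 := Finset.card_le_two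
    simp only [Finset.coe_insert, Finset.coe_singleton] at h1
    exact h1.trans h3
  have hne1 : Module.finrank ℂ V ≠ 1 := by
    intro h1
    obtain ⟨k, hk⟩ := (finrank_eq_one_iff_of_nonzero' va hva0).mp h1 vb
    have : A vb = a • vb := by rw [← hk, map_smul, hva, smul_comm]
    rw [hvb] at this
    exact hab (smul_left_injective ℂ hvb0 this).symm
  have hfin : Module.finrank ℂ V = 2 := by
    have := Module.finrank_pos (R := ℂ) (M := V)
    omega
  refine ⟨hfin, ?_⟩
  have hAB : A ≠ B := by
    intro hAB
    set p := Submodule.span ℂ ({va} : Set V) with hp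
    have htp : ∀ w ∈ p, A w ∈ p := by
      intro w hw
      obtain ⟨k, rfl⟩ := Submodule.mem_span_singleton.mp hw
      rw [map_smul, hva]
      exact p.smul_mem _ (p.smul_mem _ (Submodule.mem_span_singleton_self va))
    have htop : p = ⊤ := by
      refine (hirr.2 p (inv_of_gen ρ p htp (by rw [← hBdef, ← hAB]; exact htp))).resolve_left ?_
      intro h
      exact hva0 (Submodule.span_singleton_eq_bot.mp h)
    have := finrank_span_singleton (K := ℂ) hva0
    rw [← hp, htop, finrank_top] at this
    exact hne1 this
  let bs := Module.finBasisOfFinrankEq ℂ V hfin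
  let φ := LinearMap.toMatrixAlgEquiv bs
  have hc0 : c ≠ 0 := by rcases hc1 with rfl | rfl <;> norm_num
  have hdetB : (φ A).det = (φ B).det := by
    have h1 : (φ S).det * (φ S').det = 1 := by
      rw [← Matrix.det_mul, ← map_mul, hSS', map_one, Matrix.det_one]
    rw [hB, map_mul, map_mul, Matrix.det_mul, Matrix.det_mul]
    linear_combination (-(φ A).det) * h1
  have hd3 : (φ A).det ^ 3 = -c := by
    apply mat_det (φ A) (φ B) c hc0 _ _ hdetB (fun h => hAB (φ.injective h))
    · rw [← map_mul φ, ← map_mul φ, ← map_mul φ, ← map_mul φ, hABA, hBAB]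
    · rw [← map_mul φ, ← map_mul φ, ← map_mul φ, hABA, hSS, map_smul, map_one]
  have hchar : ∀ (x : ℂ) (v : V), v ≠ 0 → A v = x • v →
      x ^ 2 - ((φ A) 0 0 + (φ A) 1 1) * x + (φ A).det = 0 := by
    intro x v hv0 hv
    have h0 : (φ (A - x • 1)).det = 0 := by
      have : LinearMap.det (A - x • (1 : Module.End ℂ V)) = 0 := by
        by_contra hne
        apply hv0
        have hinj := (LinearMap.equivOfDetNeZero _ hne).injective
        apply hinj
        rw [map_zero]
        change A v - x • v = 0
        rw [hv, sub_self]
      rw [← LinearMap.det_toMatrix bs] at this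
      exact this
    rw [map_sub, map_smul, map_one, Matrix.det_fin_two] at h0
    simp at h0
    rw [Matrix.det_fin_two]
    linear_combination h0
  have hdet : (φ A).det = a * b := by
    have h1 := hchar a va hva0 hva
    have h3 := hchar b vb hvb0 hvb
    apply mul_left_cancel₀ (sub_ne_zero.mpr hab)
    linear_combination a * h3 - b * h1
  rw [hdet] at hd3
  have hd2 : (a * b) ^ 2 = 1 := by
    have h6 : (a * b) ^ 6 = 1 := by
      have : (a * b) ^ 6 = ((a * b) ^ 3) ^ 2 := by ring
      rw [this, hd3]
      rcases hc1 with rfl | rfl <;> norm_num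
    have h8 : (a * b) ^ 8 = 1 := by rw [mul_pow, ha8, hb8, one_mul]
    linear_combination h8 - (a * b) ^ 2 * h6
  have hab1 : a * b = 1 ∨ a * b = -1 := eq_one_or_neg_one_of_sq hd2
  have ha4 : a ^ 4 = -1 := by
    have h : a ^ 4 = 1 ∨ a ^ 4 = -1 := by
      apply eq_one_or_neg_one_of_sq
      rw [← pow_mul]; exact ha8
    refine h.resolve_left ?_
    intro h4
    have hb4 : b ^ 4 = 1 := by
      linear_combination (-b ^ 4) * h4 + ((a * b) ^ 2 + 1) * hd2
    apply hnf
    apply factors_of_t4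
    have hcop : IsCoprime (Polynomial.X - Polynomial.C a) (Polynomial.X - Polynomial.C b) :=
      Polynomial.isCoprime_X_sub_C_of_isUnit_sub (sub_ne_zero.mpr hab).isUnit
    obtain ⟨q, hq⟩ : (Polynomial.X - Polynomial.C a) * (Polynomial.X - Polynomial.C b) ∣
        (Polynomial.X ^ 4 - 1 : Polynomial ℂ) := by
      apply hcop.mul_dvd <;> rw [Polynomial.dvd_iff_isRoot] <;> simp [h4, hb4]
    have h0 := congrArg (Polynomial.aeval A) hq
    rw [map_mul, hquad0, zero_mul] at h0
    simp only [map_sub, map_pow, Polynomial.aeval_X, map_one] at h0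
    exact sub_eq_zero.mp h0
  rw [hs]
  exact spec_list a b ha4 hab1
end

section
/- Let ρ be an irreducible finite-dimensional complex representation of SL(2, ℤ/16ℤ) that does not factor through the reduction homomorphism SL(2, ℤ/16ℤ) → SL(2, ℤ/8ℤ). If ρ(t) has at most three distinct eigenvalues, then ρ is three-dimensional, ρ(t) has exactly three distinct eigenvalues, and each of these eigenvalues is a primitive 8th or a primitive 16th root of unity. -/
section Core

open Polynomial Module

variable {V : Type} [AddCommGroup V] [Module ℂ V] [FiniteDimensional ℂ V]

/-- A polynomial vanishing on the spectrum of a finite order operator annihilates it. -/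
lemma aeval_zero_of_spectrum (T : Module.End ℂ V) (hT : T ^ 16 = 1) (Q : ℂ[X])
    (hQ : ∀ z ∈ spectrum ℂ T, Q.eval z = 0) : aeval T Q = 0 := by
  have hdvd : minpoly ℂ T ∣ (X ^ 16 - 1 : ℂ[X]) := minpoly.dvd _ _ (by simp [hT])
  have hsep : (X ^ 16 - 1 : ℂ[X]).Separable := by
    have := (Polynomial.separable_X_pow_sub_C (F := ℂ) (n := 16) 1 (by norm_num) (by norm_num))
    simpa using this
  have hsep' : (minpoly ℂ T).Separable := hsep.of_dvd hdvd
  by_cases hQ0 : Q = 0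
  · simp [hQ0]
  have hd : minpoly ℂ T ∣ Q := by
    refine Polynomial.Splits.dvd_of_roots_le_roots (IsAlgClosed.splits _) ?_ ?_
    · exact minpoly.ne_zero (Algebra.IsIntegral.isIntegral T)
    · rw [Multiset.le_iff_subset (Polynomial.nodup_roots hsep')]
      intro z hz
      rw [Polynomial.mem_roots hQ0]
      apply hQ
      rw [← Module.End.hasEigenvalue_iff_mem_spectrum]
      exact Module.End.hasEigenvalue_of_isRoot (Polynomial.isRoot_of_mem_roots hz)
  exact (minpoly.dvd_iff).1 hd

lemma eig_pow {T : Module.End ℂ V} {z : ℂ} {x : V} (h : T x = z • x) (n : ℕ) :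
    (T ^ n) x = z ^ n • x := by
  induction n with
  | zero => simp
  | succ k ih => rw [pow_succ, Module.End.mul_apply, h, map_smul, ih, smul_smul, pow_succ, mul_comm]

lemma exists_eig {T : Module.End ℂ V} {z : ℂ} (h : z ∈ spectrum ℂ T) :
    ∃ x : V, x ≠ 0 ∧ T x = z • x := by
  rw [← Module.End.hasEigenvalue_iff_mem_spectrum] at h
  obtain ⟨x, hx⟩ := h.exists_hasEigenvector
  exact ⟨x, hx.2, hx.apply_eq_smul⟩

lemma mem_spec {T : Module.End ℂ V} {z : ℂ} {x : V} (hx : x ≠ 0) (h : T x = z • x) :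
    z ∈ spectrum ℂ T := by
  rw [← Module.End.hasEigenvalue_iff_mem_spectrum]
  exact Module.End.hasEigenvalue_of_hasEigenvector
    (Module.End.hasEigenvector_iff.2 ⟨Module.End.mem_eigenspace_iff.2 h, hx⟩)

lemma core (T S D D' : Module.End ℂ V) (hT : T ^ 16 = 1) (hS : S ^ 4 = 1)
    (hbr : T * S * T * S * T = S) (hZ : S ^ 2 * T = T * S ^ 2)
    (hcomm : T ^ 8 * (S ^ 3 * T ^ 8 * S) = (S ^ 3 * T ^ 8 * S) * T ^ 8)
    (hD : D' * D = 1) (hDT : T * D = D * T ^ 9)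
    (hnt : Nontrivial V)
    (hirr : ∀ p : Submodule ℂ V, (∀ x ∈ p, T x ∈ p) → (∀ x ∈ p, S x ∈ p) → p = ⊥ ∨ p = ⊤)
    (h8 : T ^ 8 ≠ 1) (h3 : (spectrum ℂ T).ncard ≤ 3) :
    Module.finrank ℂ V = 3 ∧ (spectrum ℂ T).ncard = 3 ∧
    ∀ z ∈ spectrum ℂ T, IsPrimitiveRoot z 8 ∨ IsPrimitiveRoot z 16 := by
  have hTv : ∀ x, (T ^ 16) x = x := fun x => by rw [hT]; rfl
  have hSv : ∀ x, S (S (S (S x))) = x := fun x => by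
    have := congrArg (fun f : Module.End ℂ V => f x) hS
    simpa [pow_succ] using this
  have hbrv : ∀ x, T (S (T (S (T x)))) = S x := fun x =>
    congrArg (fun f : Module.End ℂ V => f x) hbr
  have hZv : ∀ x, S (S (T x)) = T (S (S x)) := fun x => by
    have := congrArg (fun f : Module.End ℂ V => f x) hZ
    simpa [pow_succ] using this
  have hT8 : ∀ x, (T ^ 8) ((T ^ 8) x) = x := fun x => by
    rw [← Module.End.mul_apply, ← pow_add]; exact hTv x
  have hTc : ∀ n x, (T ^ n) (T x) = T ((T ^ n) x) := fun n x => by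
    rw [← Module.End.mul_apply, ← Module.End.mul_apply, ← pow_succ, ← pow_succ']
  have hSinj : ∀ x, S x = 0 → x = 0 := fun x hx => by
    have := hSv x; rw [hx] at this; simpa using this.symm
  have hTinj : ∀ x, T x = 0 → x = 0 := fun x hx => by
    have := hTv x; rw [pow_succ, Module.End.mul_apply, hx] at this; simpa using this.symm
  have half : ∀ y : V, y = -y → y = 0 := fun y hy => by
    have h2 : (2 : ℂ) • y = 0 := by rw [two_smul]; nth_rewrite 2 [hy]; exact add_neg_cancel y
    simpa using h2
  -- the spectrum consists of 16th roots of unity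
  have hz16 : ∀ z ∈ spectrum ℂ T, z ^ 16 = 1 := by
    intro z hz
    obtain ⟨x, hx, hxz⟩ := exists_eig hz
    have h := eig_pow hxz 16
    rw [hTv] at h
    have h' : (z ^ 16 - 1) • x = 0 := by rw [sub_smul, one_smul, ← h, sub_self]
    rcases smul_eq_zero.1 h' with h' | h'
    · exact sub_eq_zero.1 h'
    · exact absurd h' hx
  have hz8 : ∀ z ∈ spectrum ℂ T, z ^ 8 = 1 ∨ z ^ 8 = -1 := by
    intro z hz
    have := hz16 z hz
    exact sq_eq_sq_iff_eq_or_eq_neg.1 (by linear_combination this)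
  have hneg : ∀ z ∈ spectrum ℂ T, z ^ 8 = -1 → -z ∈ spectrum ℂ T := by
    intro z hz hz1
    obtain ⟨x, hx, hxz⟩ := exists_eig hz
    have h := eig_pow hxz 9
    refine mem_spec (x := D x) ?_ ?_
    · intro h0
      apply hx
      have := congrArg (fun f : Module.End ℂ V => f x) hD
      simp [h0] at this
      exact this.symm
    · have h1 := congrArg (fun f : Module.End ℂ V => f x) hDT
      simp only [Module.End.mul_apply] at h1
      rw [h1, h, map_smul, pow_succ, hz1]
      simp
  -- a primitive 16th root exists
  obtain ⟨l, hl, hl8⟩ : ∃ l ∈ spectrum ℂ T, l ^ 8 = -1 := by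
    by_contra! hcon
    apply h8
    have := aeval_zero_of_spectrum T hT (X ^ 8 - 1) (fun z hz => by
      rcases hz8 z hz with h | h
      · simp [h]
      · exact absurd h (hcon z hz))
    simpa [sub_eq_zero] using this
  have hl0 : l ≠ 0 := by rintro rfl; norm_num at hl8
  have hln : l ≠ -l := fun h => hl0 (self_eq_neg.1 h)
  -- S ^ 2 is a sign
  obtain ⟨e, he, heS⟩ : ∃ e : ℂ, e ^ 2 = 1 ∧ ∀ x, S (S x) = e • x := by
    rcases hirr (LinearMap.ker (S ^ 2 - 1)) (by
      intro x hx
      simp [sub_eq_zero, pow_succ] at hx ⊢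
      rw [hZv, hx]) (by
      intro x hx
      simp [sub_eq_zero, pow_succ] at hx ⊢
      rw [hx]) with h | h
    · refine ⟨-1, by norm_num, fun x => ?_⟩
      have : S (S x) + x ∈ LinearMap.ker (S ^ 2 - 1) := by
        simp [pow_succ, hSv]
        abel
      rw [h, Submodule.mem_bot] at this
      rw [neg_one_smul]
      exact eq_neg_of_add_eq_zero_left this
    · refine ⟨1, by norm_num, fun x => ?_⟩
      have : x ∈ LinearMap.ker (S ^ 2 - 1) := by rw [h]; trivial
      simpa [sub_eq_zero, pow_succ] using this
  -- a third eigenvalue exists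
  obtain ⟨n, hn, hnl, hnl'⟩ : ∃ n ∈ spectrum ℂ T, n ≠ l ∧ n ≠ -l := by
    by_contra! hcon
    have := aeval_zero_of_spectrum T hT (X ^ 2 - C (l ^ 2)) (fun z hz => by
      by_cases hzl : z = l
      · simp [hzl]
      · simp [hcon z hz hzl])
    have hT2 : ∀ x, T (T x) = l ^ 2 • x := fun x => by
      have := congrArg (fun f : Module.End ℂ V => f x) this
      simpa [sub_eq_zero, pow_succ, Algebra.algebraMap_eq_smul_one, smul_smul] using this
    obtain ⟨x, hx⟩ := exists_ne (0 : V)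
    have a1 : l ^ 2 • S (T (S (T x))) = T (S x) := by rw [← hbrv x, hT2]
    have a2 : S (T (S (T x))) = (l ^ 2 * e) • T (S (T (T x))) := by
      have h := hbrv (T x)
      have h' : T (T (S (T (S (T (T x)))))) = T (S (T x)) := by rw [h]
      rw [hT2] at h'
      rw [← h', map_smul, heS, smul_smul]
    rw [a2, hT2, map_smul, map_smul, smul_smul, smul_smul] at a1
    have hne : T (S x) ≠ 0 := fun h => hx (hSinj _ (hTinj _ h))
    have a3 : (l ^ 2 * (l ^ 2 * e) * l ^ 2 - 1) • T (S x) = 0 := by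
      rw [sub_smul, one_smul, a1, sub_self]
    have a4 : l ^ 6 * e = 1 := by
      have := (smul_eq_zero.1 a3).resolve_right hne
      linear_combination this
    have a5 : l ^ 12 = 1 := by
      linear_combination (l ^ 6 * e + 1) * a4 - l ^ 12 * he
    have a6 : l ^ 4 = -1 := by linear_combination l ^ 4 * hl8 - a5
    have a7 : l ^ 8 = 1 := by linear_combination (l ^ 4 - 1) * a6
    rw [a7] at hl8
    norm_num at hl8
  have hl' := hneg l hl hl8
  have hfin : (spectrum ℂ T).Finite := Module.End.finite_spectrum T
  have hsub : ({l, -l, n} : Set ℂ) ⊆ spectrum ℂ T := by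
    rintro z (rfl | rfl | rfl) <;> assumption
  have hcard : ({l, -l, n} : Set ℂ).ncard = 3 := by
    rw [Set.ncard_eq_three]
    exact ⟨l, -l, n, hln, hnl.symm, hnl'.symm, rfl⟩
  have hspec : ({l, -l, n} : Set ℂ) = spectrum ℂ T :=
    Set.eq_of_subset_of_ncard_le hsub (by rw [hcard]; exact h3) hfin
  have hspec' : ∀ z ∈ spectrum ℂ T, z = l ∨ z = -l ∨ z = n := fun z hz => by
    rw [← hspec] at hz; simpa using hz
  have hn8 : n ^ 8 = 1 := by
    rcases hz8 n hn with h | h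
    · exact h
    · exfalso
      have hn0 : n ≠ 0 := by rintro rfl; norm_num at h
      rcases hspec' _ (hneg n hn h) with h | h | h
      · exact hnl' (by rw [← h, neg_neg])
      · exact hnl (neg_injective h)
      · exact hn0 (self_eq_neg.1 h.symm)
  have hn0 : n ≠ 0 := by rintro rfl; norm_num at hn8
  -- cubic relation
  have hcub : ∀ x, T (T (T x)) - l ^ 2 • T x - n • (T (T x) - l ^ 2 • x) = 0 := by
    intro x
    have := aeval_zero_of_spectrum T hT ((X ^ 2 - C (l ^ 2)) * (X - C n)) (fun z hz => by
      rcases hspec' z hz with h | h | h <;> simp [h])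
    have := congrArg (fun f : Module.End ℂ V => f x) this
    simp [pow_succ, Algebra.algebraMap_eq_smul_one, smul_smul] at this
    rw [← this, smul_sub, smul_smul]
    ring_nf
    module
  -- a vector fixed by `T ^ 8` and moved by its conjugate
  obtain ⟨v, hv8, hv⟩ : ∃ v, (T ^ 8) v = v ∧ (T ^ 8) (S v) ≠ S v := by
    by_contra! hcon
    rcases hirr (LinearMap.ker (T ^ 8 - 1)) (by
      intro x hx
      simp only [LinearMap.mem_ker, LinearMap.sub_apply, Module.End.one_apply, sub_eq_zero] at hx ⊢
      rw [hTc, hx]) (by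
      intro x hx
      simp only [LinearMap.mem_ker, LinearMap.sub_apply, Module.End.one_apply, sub_eq_zero] at hx ⊢
      exact hcon x hx) with h | h
    · obtain ⟨x, hx, hxz⟩ := exists_eig hn
      apply hx
      rw [← Submodule.mem_bot ℂ, ← h]
      simp only [LinearMap.mem_ker, LinearMap.sub_apply, Module.End.one_apply, sub_eq_zero]
      rw [eig_pow hxz, hn8, one_smul]
    · apply h8
      rw [LinearMap.ker_eq_top, sub_eq_zero] at h
      exact h
  obtain ⟨w, hw0, hw8, hwS⟩ : ∃ w, w ≠ 0 ∧ (T ^ 8) w = w ∧ (T ^ 8) (S w) = - S w := by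
    have hSw : S (v - S (S (S ((T ^ 8) (S v))))) = S v - (T ^ 8) (S v) := by
      rw [map_sub, hSv]
    refine ⟨v - S (S (S ((T ^ 8) (S v)))), ?_, ?_, ?_⟩
    · intro h
      rw [h, map_zero] at hSw
      exact hv (sub_eq_zero.1 hSw.symm).symm
    · have := congrArg (fun f : Module.End ℂ V => f v) hcomm
      have hS3 : ∀ x, (S ^ 3) x = S (S (S x)) := fun x => by simp [pow_succ]
      simp only [Module.End.mul_apply, hS3, hv8] at this
      rw [map_sub, hv8, this]
    · rw [hSw, map_sub, hT8, neg_sub]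
  have hTw : T w = n • w := by
    have hy : T w - n • w = 0 := by
      set y := T w - n • w with hydef
      have h1 : T (T y) = l ^ 2 • y := by
        rw [← sub_eq_zero, ← hcub w, hydef]
        simp only [map_sub, map_smul]
        module
      have h2 : (T ^ 8) y = y := by
        rw [hydef, map_sub, map_smul, hTc, hw8]
      apply half
      have h3 : (T ^ 8) y = (l ^ 8) • y := by
        have := eig_pow (T := T ^ 2) (z := l ^ 2) (x := y) (by simpa [pow_succ] using h1) 4
        rwa [← pow_mul, ← pow_mul] at this
      rw [hl8, neg_one_smul, h2] at h3
      exact h3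
    exact sub_eq_zero.1 hy
  have hTSw : T (T (S w)) = l ^ 2 • S w := by
    have hy : T (T (S w)) - l ^ 2 • S w = 0 := by
      set y := T (T (S w)) - l ^ 2 • S w with hydef
      have h1 : T y = n • y := by
        rw [← sub_eq_zero, ← hcub (S w), hydef]
        simp only [map_sub, map_smul]
      have h2 : (T ^ 8) y = -y := by
        rw [hydef, map_sub, map_smul, hTc, hTc, hwS]
        simp only [map_neg]
        module
      apply half
      have h3 := eig_pow h1 8
      rw [hn8, one_smul, h2] at h3
      exact h3.symm
    exact sub_eq_zero.1 hy
  -- action of `S` on the third basis vector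
  have hS3 : (n * l ^ 2) • S (T (S w)) = T (S w) := by
    have h := hbrv w
    rw [hTw, map_smul, map_smul, map_smul, map_smul] at h
    rw [← sub_eq_zero]
    apply hTinj
    rw [map_sub, map_smul, hTSw, mul_comm, mul_smul, h, sub_self]
  have hnl0 : n * l ^ 2 ≠ 0 := mul_ne_zero hn0 (pow_ne_zero _ hl0)
  have hS3' : S (T (S w)) = (n * l ^ 2)⁻¹ • T (S w) := by
    rw [eq_inv_smul_iff₀ hnl0, hS3]
  have hx0 : T (S w) ≠ 0 := fun h => hw0 (hSinj _ (hTinj _ h))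
  -- the invariant subspace
  let b : Fin 3 → V := ![w, S w, T (S w)]
  have hb0 : w ∈ Submodule.span ℂ (Set.range b) := Submodule.subset_span ⟨0, rfl⟩
  have hb1 : S w ∈ Submodule.span ℂ (Set.range b) := Submodule.subset_span ⟨1, rfl⟩
  have hb2 : T (S w) ∈ Submodule.span ℂ (Set.range b) := Submodule.subset_span ⟨2, rfl⟩
  have hstab : ∀ f : Module.End ℂ V, (∀ i, f (b i) ∈ Submodule.span ℂ (Set.range b)) →
      ∀ x ∈ Submodule.span ℂ (Set.range b), f x ∈ Submodule.span ℂ (Set.range b) := by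
    intro f hf
    change Submodule.span ℂ (Set.range b) ≤ (Submodule.span ℂ (Set.range b)).comap f
    rw [Submodule.span_le]
    rintro _ ⟨i, rfl⟩
    exact hf i
  have htop : Submodule.span ℂ (Set.range b) = ⊤ := by
    refine (hirr _ (hstab T ?_) (hstab S ?_)).resolve_left ?_
    · intro i
      fin_cases i
      · change T w ∈ _
        rw [hTw]
        exact Submodule.smul_mem _ _ hb0
      · exact hb2
      · change T (T (S w)) ∈ _
        rw [hTSw]
        exact Submodule.smul_mem _ _ hb1
    · intro i
      fin_cases i
      · exact hb1
      · change S (S w) ∈ _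
        rw [heS]
        exact Submodule.smul_mem _ _ hb0
      · change S (T (S w)) ∈ _
        rw [hS3']
        exact Submodule.smul_mem _ _ hb2
    · intro h
      rw [h] at hb0
      exact hw0 ((Submodule.mem_bot ℂ).1 hb0)
  have hle : Module.finrank ℂ V ≤ 3 := by
    have := finrank_range_le_card (R := ℂ) b
    rw [Set.finrank, htop, finrank_top] at this
    simpa using this
  have hge : 3 ≤ Module.finrank ℂ V := by
    let m : Fin 3 → ℂ := ![l, -l, n]
    have hm : ∀ i, m i ∈ spectrum ℂ T := by
      intro i
      fin_cases i
      · exact hl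
      · exact hl'
      · exact hn
    choose x hx0 hx using fun i => exists_eig (hm i)
    have hinj : Function.Injective m := by
      intro i j hij
      fin_cases i <;> fin_cases j <;> first
        | rfl
        | exact absurd hij hln
        | exact absurd hij.symm hln
        | exact absurd hij hnl
        | exact absurd hij.symm hnl
        | exact absurd hij hnl'
        | exact absurd hij.symm hnl'
    have := Module.End.eigenvectors_linearIndependent' T m hinj x (fun i =>
      Module.End.hasEigenvector_iff.2 ⟨Module.End.mem_eigenspace_iff.2 (hx i), hx0 i⟩)
    simpa using this.fintype_card_le_finrank
  have hn4 : n ^ 4 = -1 := by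
    have h1 : e • T (S w) = ((n * l ^ 2)⁻¹ * (n * l ^ 2)⁻¹) • T (S w) := by
      rw [← heS, hS3', map_smul, hS3', smul_smul]
    have h2 : e = (n * l ^ 2)⁻¹ * (n * l ^ 2)⁻¹ := smul_left_injective ℂ hx0 h1
    have h4 : e * (n * l ^ 2) ^ 2 = 1 := by
      rw [h2]
      field_simp
    have h5 : n ^ 4 * l ^ 8 = 1 := by
      linear_combination (e * (n * l ^ 2) ^ 2 + 1) * h4 - n ^ 4 * l ^ 8 * he
    rw [hl8] at h5
    linear_combination -h5
  refine ⟨le_antisymm hle hge, by rw [← hspec, hcard], ?_⟩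
  have key : ∀ (z : ℂ) (k : ℕ), z ^ (2 ^ k) = -1 → IsPrimitiveRoot z (2 ^ (k + 1)) := by
    intro z k hz
    have : orderOf z = 2 ^ (k + 1) := by
      apply orderOf_eq_prime_pow
      · rw [hz]; norm_num
      · rw [pow_succ, pow_mul, hz]; norm_num
    rw [← this]
    exact IsPrimitiveRoot.orderOf z
  intro z hz
  rcases hspec' z hz with rfl | rfl | rfl
  · exact Or.inr (key _ 3 hl8)
  · exact Or.inr (key _ 3 (by rw [← hl8]; ring))
  · exact Or.inl (key _ 2 hn4)

end Core

section Gen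

def upM (n : ℕ) (x : ZMod n) : SL2 n := ⟨!![1, x; 0, 1], by simp [Matrix.det_fin_two_of]⟩

def loM (n : ℕ) (x : ZMod n) : SL2 n := ⟨!![1, 0; x, 1], by simp [Matrix.det_fin_two_of]⟩

def sM (n : ℕ) : SL2 n := ⟨!![0, -1; 1, 0], by simp [Matrix.det_fin_two_of]⟩

def dM : SL2 16 := ⟨!![3, 0; 0, 11], by decide⟩

def dM' : SL2 16 := ⟨!![11, 0; 0, 3], by decide⟩

lemma sl_ext {n : ℕ} {A B : SL2 n} (h : A.1 = B.1) : A = B := Subtype.ext h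

lemma val_mul (n : ℕ) (A B : SL2 n) : (A * B).1 = A.1 * B.1 := rfl

lemma val_inv (n : ℕ) (A : SL2 n) : (A⁻¹).1 = A.1.adjugate := rfl

lemma val_up (n : ℕ) (x : ZMod n) : (upM n x).1 = !![1, x; 0, 1] := rfl

lemma val_lo (n : ℕ) (x : ZMod n) : (loM n x).1 = !![1, 0; x, 1] := rfl

lemma val_s (n : ℕ) : (sM n).1 = !![0, -1; 1, 0] := rfl

lemma val_t (n : ℕ) : (tGen n).1 = !![1, 1; 0, 1] := rfl

lemma sl2_mem_of_unit (n : ℕ) (H : Subgroup (SL2 n)) (hU : ∀ x, upM n x ∈ H)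
    (hL : ∀ x, loM n x ∈ H) (g : SL2 n) (u : ZMod n) (hu : u * g.1 1 0 = 1) : g ∈ H := by
  have hdet := g.2
  rw [Matrix.det_fin_two] at hdet
  have : g = upM n (-((1 - g.1 0 0) * u)) * loM n (g.1 1 0) *
      upM n (g.1 0 1 + (1 - g.1 0 0) * u * g.1 1 1) := by
    apply sl_ext
    rw [val_mul, val_mul, val_up, val_up, val_lo]
    have hgm : g.1 = !![g.1 0 0, g.1 0 1; g.1 1 0, g.1 1 1] := Matrix.eta_fin_two _
    rw [hgm]
    simp only [Matrix.of_apply, Matrix.cons_val', Matrix.cons_val_zero, Matrix.cons_val_one,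
      Matrix.cons_val_fin_one]
    generalize g.1 0 0 = a, g.1 0 1 = b, g.1 1 0 = c, g.1 1 1 = d at *
    ext i j
    fin_cases i <;> fin_cases j <;> simp [Matrix.mul_apply, Fin.sum_univ_two]
    · linear_combination (1 - a) * hu
    · linear_combination (-((1 - a) * u)) * (hdet - (1 - a) * d * hu)
    · linear_combination hdet - (1 - a) * d * hu
  rw [this]
  exact H.mul_mem (H.mul_mem (hU _) (hL _)) (hU _)

lemma sl2_mem (n : ℕ) (hloc : ∀ a c : ZMod n, (∃ u, u * c = 1) ∨ (∃ u, u * (a + c) = 1) ∨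
      ∃ z, z ≠ 0 ∧ z * a = 0 ∧ z * c = 0)
    (H : Subgroup (SL2 n)) (hU : ∀ x, upM n x ∈ H)
    (hL : ∀ x, loM n x ∈ H) (g : SL2 n) : g ∈ H := by
  have hdet := g.2
  rw [Matrix.det_fin_two] at hdet
  rcases hloc (g.1 0 0) (g.1 1 0) with ⟨u, hu⟩ | ⟨u, hu⟩ | ⟨z, hz, ha, hc⟩
  · exact sl2_mem_of_unit n H hU hL g u hu
  · have h := sl2_mem_of_unit n H hU hL (loM n 1 * g) u (by
      rw [val_mul, val_lo]
      simpa [Matrix.mul_apply, Fin.sum_univ_two] using hu)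
    exact (H.mul_mem_cancel_left (hL 1)).1 h
  · exfalso
    apply hz
    linear_combination (-z) * hdet + g.1 1 1 * ha - g.1 0 1 * hc

lemma upM_natCast (n k : ℕ) : upM n k = tGen n ^ k := by
  induction k with
  | zero =>
    apply Subtype.ext
    simp [upM, Matrix.one_fin_two]
  | succ k ih =>
    rw [pow_succ, ← ih]
    apply sl_ext
    rw [val_mul, val_up, val_up, val_t]
    simp [add_comm]

lemma loM_eq (n : ℕ) (x : ZMod n) : loM n x = sM n * upM n (-x) * (sM n)⁻¹ := by
  apply sl_ext
  rw [val_mul, val_mul, val_inv, val_up, val_lo, val_s]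
  simp [Matrix.adjugate_fin_two]

lemma upM_mem (n : ℕ) [NeZero n] (H : Subgroup (SL2 n)) (h : tGen n ∈ H) (x : ZMod n) :
    upM n x ∈ H := by
  rw [← ZMod.natCast_zmod_val x, upM_natCast]
  exact H.pow_mem h _

lemma gen16 (H : Subgroup (SL2 16)) (ht : tGen 16 ∈ H) (hs : sM 16 ∈ H) : H = ⊤ := by
  rw [eq_top_iff]
  intro g _
  refine sl2_mem 16 ?_ H (upM_mem 16 H ht) ?_ g
  · have : ∀ a c : ZMod 16, (∃ u, u * c = 1) ∨ (∃ u, u * (a + c) = 1) ∨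
      (8 * a = 0 ∧ 8 * c = 0) := by decide
    intro a c
    rcases this a c with h | h | h
    · exact Or.inl h
    · exact Or.inr (Or.inl h)
    · exact Or.inr (Or.inr ⟨8, by decide, h⟩)
  · intro x
    rw [loM_eq]
    exact H.mul_mem (H.mul_mem hs (upM_mem 16 H ht _)) (H.inv_mem hs)

abbrev redM : SL2 16 →* SL2 8 := Matrix.SpecialLinearGroup.map
        (ZMod.castHom (by norm_num : (8:ℕ) ∣ 16) (ZMod 8))

lemma redM_surj : Function.Surjective redM := by
  rw [← MonoidHom.range_eq_top, eq_top_iff]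
  intro g _
  have hcast : ∀ x : ZMod 8, ZMod.castHom (by norm_num : (8:ℕ) ∣ 16) (ZMod 8)
      (x.val : ZMod 16) = x := by decide
  refine sl2_mem 8 ?_ _ ?_ ?_ g
  · have : ∀ a c : ZMod 8, (∃ u, u * c = 1) ∨ (∃ u, u * (a + c) = 1) ∨
      (4 * a = 0 ∧ 4 * c = 0) := by decide
    intro a c
    rcases this a c with h | h | h
    · exact Or.inl h
    · exact Or.inr (Or.inl h)
    · exact Or.inr (Or.inr ⟨4, by decide, h⟩)
  · intro x
    refine ⟨upM 16 (x.val : ZMod 16), ?_⟩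
    apply Subtype.ext
    ext i j
    fin_cases i <;> fin_cases j
    · exact map_one (ZMod.castHom (by norm_num : (8:ℕ) ∣ 16) (ZMod 8))
    · exact hcast x
    · exact map_zero (ZMod.castHom (by norm_num : (8:ℕ) ∣ 16) (ZMod 8))
    · exact map_one (ZMod.castHom (by norm_num : (8:ℕ) ∣ 16) (ZMod 8))
  · intro x
    refine ⟨loM 16 (x.val : ZMod 16), ?_⟩
    apply Subtype.ext
    ext i j
    fin_cases i <;> fin_cases j
    · exact map_one (ZMod.castHom (by norm_num : (8:ℕ) ∣ 16) (ZMod 8))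
    · exact map_zero (ZMod.castHom (by norm_num : (8:ℕ) ∣ 16) (ZMod 8))
    · exact hcast x
    · exact map_one (ZMod.castHom (by norm_num : (8:ℕ) ∣ 16) (ZMod 8))

lemma redM_ker (N : Subgroup (SL2 16)) [N.Normal] (h : tGen 16 ^ 8 ∈ N) : redM.ker ≤ N := by
  have hU : upM 16 8 ∈ N := by
    have := upM_natCast 16 8
    rw [← this] at h
    exact h
  have hL : loM 16 8 ∈ N := by
    rw [loM_eq]
    exact Subgroup.Normal.conj_mem ‹_› _ hU _
  have hM : loM 16 1 * upM 16 8 * (loM 16 1)⁻¹ ∈ N := Subgroup.Normal.conj_mem ‹_› _ hU _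
  have hM' := N.mul_mem (N.mul_mem hM hU) hL
  have hU' : ∀ x : ZMod 16, x = 0 ∨ x = 8 → upM 16 x ∈ N := by
    rintro x (rfl | rfl)
    · have := upM_natCast 16 0
      simp at this
      rw [this]
      exact N.one_mem
    · exact hU
  have hL' : ∀ x : ZMod 16, x = 0 ∨ x = 8 → loM 16 x ∈ N := by
    rintro x (rfl | rfl)
    · have : loM 16 0 = 1 := by decide
      rw [this]
      exact N.one_mem
    · exact hL
  intro g hg
  rw [MonoidHom.mem_ker] at hg
  have hg' : ∀ i j, ZMod.castHom (by norm_num : (8:ℕ) ∣ 16) (ZMod 8) (g.1 i j) =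
      (1 : Matrix (Fin 2) (Fin 2) (ZMod 8)) i j := fun i j =>
    congrArg (fun f : SL2 8 => f.1 i j) hg
  have k1 : ∀ x : ZMod 16, ZMod.castHom (by norm_num : (8:ℕ) ∣ 16) (ZMod 8) x = 1 →
    x = 1 ∨ x = 9 := by decide
  have k0 : ∀ x : ZMod 16, ZMod.castHom (by norm_num : (8:ℕ) ∣ 16) (ZMod 8) x = 0 →
    x = 0 ∨ x = 8 := by decide
  have ha := k1 _ (hg' 0 0)
  have hb := k0 _ (hg' 0 1)
  have hc := k0 _ (hg' 1 0)
  have hd := k1 _ (hg' 1 1)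
  have hdet := g.2
  rw [Matrix.det_fin_two] at hdet
  have hmem : ∀ b c : ZMod 16, (b = 0 ∨ b = 8) → (c = 0 ∨ c = 8) →
      upM 16 b * loM 16 c ∈ N := fun b c hb hc => N.mul_mem (hU' b hb) (hL' c hc)
  have hmem1 := hmem _ _ hb hc
  have hmem2 := N.mul_mem hM' hmem1
  have hdec : g = upM 16 (g.1 0 1) * loM 16 (g.1 1 0) ∨
      g = loM 16 1 * upM 16 8 * (loM 16 1)⁻¹ * upM 16 8 * loM 16 8 *
        (upM 16 (g.1 0 1) * loM 16 (g.1 1 0)) := by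
    have hgm : g.1 = !![g.1 0 0, g.1 0 1; g.1 1 0, g.1 1 1] := Matrix.eta_fin_two _
    have hpull : ∀ h : SL2 16, g.1 = h.1 → g = h := fun h hh => Subtype.ext hh
    generalize g.1 0 0 = a, g.1 0 1 = b, g.1 1 0 = c, g.1 1 1 = d at *
    rcases ha with rfl | rfl <;> rcases hd with rfl | rfl <;>
      rcases hb with rfl | rfl <;> rcases hc with rfl | rfl <;>
      first
      | exact absurd hdet (by decide)
      | exact Or.inl (hpull _ (hgm.trans (by decide)))
      | exact Or.inr (hpull _ (hgm.trans (by decide)))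
  rcases hdec with h | h
  · rw [h]; exact hmem1
  · rw [h]; exact hmem2

lemma exists_lift {M : Type} [Monoid M] (f : SL2 16 →* M) (h : redM.ker ≤ f.ker) :
    ∃ f' : SL2 8 →* M, f'.comp redM = f := by
  have hr := Function.rightInverse_surjInv redM_surj
  have key : ∀ a b : SL2 16, redM a = redM b → f a = f b := by
    intro a b hab
    have : a * b⁻¹ ∈ redM.ker := by
      rw [MonoidHom.mem_ker, map_mul, hab, ← map_mul, mul_inv_cancel, map_one]
    have h1 : f (a * b⁻¹) = 1 := h this
    calc f a = f (a * b⁻¹ * b) := by rw [inv_mul_cancel_right]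
      _ = f b := by rw [map_mul, h1, one_mul]
  refine ⟨⟨⟨fun x => f (Function.surjInv redM_surj x), ?_⟩, ?_⟩, ?_⟩
  · rw [← map_one f]
    apply key
    rw [hr, map_one]
  · intro x y
    change f _ = f _ * f _
    rw [← map_mul]
    apply key
    rw [map_mul, hr, hr, hr]
  · ext a
    exact key _ _ (hr _)

end Gen

/-- If `ρ` is an irreducible finite-dimensional complex representation of `SL(2, ℤ/16ℤ)`
that does not factor through `SL(2, ℤ/8ℤ)` and `ρ(t)` has at most three distinct
eigenvalues, then `ρ` is three-dimensional, `ρ(t)` has exactly three distinct eigenvalues,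
and each eigenvalue is a primitive 8th or primitive 16th root of unity. -/
theorem stmt10
    (V : Type) [AddCommGroup V] [Module ℂ V] [FiniteDimensional ℂ V]
    (ρ : Representation ℂ (SL2 16) V)
    (hirr : IsIrreducibleRep ρ)
    (hnf : ¬ ∃ ρ' : Representation ℂ (SL2 8) V,
      ρ = ρ'.comp (Matrix.SpecialLinearGroup.map
        (ZMod.castHom (by norm_num : (8:ℕ) ∣ 16) (ZMod 8))))
    (h3 : (spectrum ℂ (ρ (tGen 16))).ncard ≤ 3) :
    Module.finrank ℂ V = 3 ∧ (spectrum ℂ (ρ (tGen 16))).ncard = 3 ∧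
    ∀ z ∈ spectrum ℂ (ρ (tGen 16)), IsPrimitiveRoot z 8 ∨ IsPrimitiveRoot z 16 := by
  have hker : ∀ {a b : SL2 16}, a = b → ρ a = ρ b := fun h => by rw [h]
  refine core (ρ (tGen 16)) (ρ (sM 16)) (ρ dM) (ρ dM') ?_ ?_ ?_ ?_ ?_ ?_ ?_ hirr.1 ?_ ?_ h3
  · rw [← map_pow, ← map_one ρ]
    exact hker (by decide)
  · rw [← map_pow, ← map_one ρ]
    exact hker (by decide)
  · simp only [← map_mul]
    exact hker (by decide)
  · simp only [← map_mul, ← map_pow]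
    exact hker (by decide)
  · simp only [← map_mul, ← map_pow]
    exact hker (by decide)
  · rw [← map_mul, ← map_one ρ]
    exact hker (by decide)
  · simp only [← map_mul, ← map_pow]
    exact hker (by decide)
  · intro p hpT hpS
    apply hirr.2
    have hcl : ∀ g : SL2 16, g ∈ Subgroup.closure {tGen 16, sM 16} := by
      intro g
      rw [gen16 (Subgroup.closure {tGen 16, sM 16}) (Subgroup.subset_closure (by simp))
        (Subgroup.subset_closure (by simp))]
      trivial
    have hfin : ∀ g : SL2 16, g ∈ Submonoid.closure {tGen 16, sM 16} := by
      intro g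
      have := hcl g
      rw [← Subgroup.mem_toSubmonoid, Subgroup.closure_toSubmonoid_of_finite] at this
      exact this
    intro g
    have : ∀ x ∈ p, ρ g x ∈ p := by
      induction hfin g using Submonoid.closure_induction with
      | mem y hy =>
        rcases hy with rfl | rfl
        · exact hpT
        · exact hpS
      | one => intro x hx; simpa using hx
      | mul y z _ _ hy hz =>
        intro x hx
        rw [map_mul]
        exact hy _ (hz _ hx)
    rintro _ ⟨x, hx, rfl⟩
    exact this x hx
  · intro h8
    apply hnf
    rw [← map_pow] at h8
    have hle := redM_ker (MonoidHom.ker ρ) h8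
    obtain ⟨ρ', h'⟩ := exists_lift ρ hle
    exact ⟨ρ', h'.symm⟩
end

section
/- Let a and b be nonnegative integers and set α = 2^a·(1+√2)^b ∈ ℝ, whose Galois conjugate is σ(α) = 2^a·(1−√2)^b. If α ≥ 2 and σ(α) ≥ 2, and N(α−1) divides T(α−1)² in ℤ (i.e., α−1 is an algebraic d-number), then b = 0, i.e., α ∈ ℤ. -/
theorem pell_form (b : ℕ) : ∃ p q : ℤ, (1 + Real.sqrt 2) ^ b = (p : ℝ) + q * Real.sqrt 2 ∧
    (1 - Real.sqrt 2) ^ b = (p : ℝ) - q * Real.sqrt 2 := by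
  have hs : Real.sqrt 2 * Real.sqrt 2 = 2 := Real.mul_self_sqrt (by norm_num)
  induction b with
  | zero => exact ⟨1, 0, by simp, by simp⟩
  | succ n ih =>
    obtain ⟨p, q, h1, h2⟩ := ih
    refine ⟨p + 2 * q, p + q, ?_, ?_⟩
    · rw [pow_succ, h1]; push_cast; linear_combination (q : ℝ) * hs
    · rw [pow_succ, h2]; push_cast; linear_combination (q : ℝ) * hs

/-- Let `α = 2^a·(1+√2)^b` with Galois conjugate `σ(α) = 2^a·(1−√2)^b`.  If `α` and `σ(α)`
are both at least `2`, and the norm `N(α−1)` divides the square of the trace `T(α−1)` in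
`ℤ` (i.e. `α − 1` is an algebraic d-number), then `b = 0`, i.e. `α ∈ ℤ`. -/
theorem stmt11 (a b : ℕ)
    (h1 : (2 : ℝ) ≤ 2 ^ a * (1 + Real.sqrt 2) ^ b)
    (h2 : (2 : ℝ) ≤ 2 ^ a * (1 - Real.sqrt 2) ^ b)
    (hd : ∃ N T : ℤ,
      (N : ℝ) = (2 ^ a * (1 + Real.sqrt 2) ^ b - 1) * (2 ^ a * (1 - Real.sqrt 2) ^ b - 1) ∧
      (T : ℝ) = (2 ^ a * (1 + Real.sqrt 2) ^ b - 1) + (2 ^ a * (1 - Real.sqrt 2) ^ b - 1) ∧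
      N ∣ T ^ 2) :
    b = 0 := by
  obtain ⟨N, T, hN, hT, k, hk⟩ := hd
  obtain ⟨p, q, hp, hq⟩ := pell_form b
  have hs : Real.sqrt 2 * Real.sqrt 2 = 2 := Real.mul_self_sqrt (by norm_num)
  have hs1 : (1 : ℝ) < Real.sqrt 2 := by
    rw [Real.lt_sqrt] <;> norm_num
  have hx : (0 : ℝ) < 2 ^ a := by positivity
  have hev : Even b := by
    by_contra ho
    have h := (Nat.not_even_iff_odd.mp ho).pow_neg (show (1 - Real.sqrt 2 : ℝ) < 0 by linarith)
    nlinarith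
  have huv : (1 + Real.sqrt 2) ^ b * (1 - Real.sqrt 2) ^ b = 1 := by
    rw [← mul_pow, show (1 + Real.sqrt 2) * (1 - Real.sqrt 2) = -1 by linear_combination -hs]
    exact hev.neg_one_pow
  obtain ⟨x, hxd⟩ : ∃ x : ℤ, x = 2 ^ a := ⟨_, rfl⟩
  have hxr : (2 : ℝ) ^ a = x := by rw [hxd]; push_cast; rfl
  have huv1 : ((p : ℝ) + q * Real.sqrt 2) * (p - q * Real.sqrt 2) = 1 := by
    rw [← hp, ← hq]; exact huv
  have hNz : N = x ^ 2 + 1 - 2 * x * p := by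
    have : (N : ℝ) = x ^ 2 + 1 - 2 * x * p := by
      rw [hN, hp, hq, hxr]; linear_combination (x : ℝ) ^ 2 * huv1
    exact_mod_cast this
  have hTz : T = 2 * x * p - 2 := by
    have : (T : ℝ) = 2 * x * p - 2 := by
      rw [hT, hp, hq, hxr]; ring
    exact_mod_cast this
  -- the quotient `k` is `4` modulo `x ^ 2`
  have hdvd : x ^ 2 ∣ k - 4 := by
    have hc : IsCoprime (x ^ 2) N := by
      rw [hNz]
      exact IsCoprime.pow_left ⟨-(x - 2 * p), 1, by ring⟩
    refine hc.dvd_of_dvd_mul_left ⟨4 * p ^ 2 - 4, ?_⟩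
    have h := hk
    rw [hTz] at h
    linear_combination -h - 4 * hNz
  have hxpos : 0 < x := by rw [hxd]; positivity
  set A : ℝ := 2 ^ a * (1 + Real.sqrt 2) ^ b - 1 with hA
  set B : ℝ := 2 ^ a * (1 - Real.sqrt 2) ^ b - 1 with hB
  have hA1 : 1 ≤ A := by linarith
  have hB1 : 1 ≤ B := by linarith
  have hAB : (x : ℝ) ^ 2 = (A + 1) * (B + 1) := by
    rw [hA, hB, ← hxr]; linear_combination -(2 ^ a : ℝ) ^ 2 * huv
  have hkr : (A + B) ^ 2 = A * B * k := by
    rw [← hN, ← hT]; exact_mod_cast hk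
  have hABpos : 1 ≤ A * B := by nlinarith
  have hk4 : k = 4 := by
    have hlt : (k : ℝ) < x ^ 2 + 4 := by
      by_contra hcon
      push Not at hcon
      have h3 : A * B * ((A + 1) * (B + 1) + 4) ≤ (A + B) ^ 2 := by
        rw [hkr, ← hAB]
        exact mul_le_mul_of_nonneg_left hcon (by linarith)
      have h4 : A ^ 2 ≤ A ^ 2 * B ^ 2 := by nlinarith [sq_nonneg A]
      have h5 : B ^ 2 ≤ A * B ^ 2 := by nlinarith [sq_nonneg B]
      have h6 : 0 ≤ A ^ 2 * B := by positivity
      nlinarith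
    have hge : (4 : ℝ) ≤ k := by
      by_contra hcon
      push Not at hcon
      nlinarith [sq_nonneg (A - B)]
    have hlt' : k < x ^ 2 + 4 := by exact_mod_cast hlt
    have hge' : 4 ≤ k := by exact_mod_cast hge
    have := Int.eq_zero_of_dvd_of_nonneg_of_lt (by linarith) (by linarith) hdvd
    linarith
  have hABe : A = B := by
    rw [hk4] at hkr
    push_cast at hkr
    have : (A - B) ^ 2 = 0 := by linear_combination hkr
    have := pow_eq_zero_iff (two_ne_zero) |>.mp this
    linarith
  by_contra hb
  have he : (1 + Real.sqrt 2) ^ b = (1 - Real.sqrt 2) ^ b := by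
    apply mul_left_cancel₀ hx.ne'
    linarith
  have hgt : 1 < (1 + Real.sqrt 2) ^ b := one_lt_pow₀ (by linarith) hb
  rw [← he] at huv
  nlinarith
end

section
/- Let α be an algebraic integer in ℚ(√5) such that N(α) = 5^k for some integer k ≥ 1, α² is an integer multiple of a unit of ℤ[φ] (α is an algebraic d-number), and both α and σ(α) lie in the interval [1, 18]. Then α is one of the five numbers (5+√5)/2, (5−√5)/2, (5/2)(3+√5), (5/2)(3−√5), and 5; conversely, each of these five numbers satisfies all the hypotheses. -/
/-- The golden ratio `φ = (1+√5)/2`. -/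
noncomputable def φ : ℝ := (1 + Real.sqrt 5) / 2

/-- The Galois conjugate `φ' = (1−√5)/2` of the golden ratio. -/
noncomputable def φconj : ℝ := (1 - Real.sqrt 5) / 2

/-- Membership in `ℤ[φ]`, the ring of integers of `ℚ(√5)`. -/
def InZphi (x : ℝ) : Prop := ∃ a b : ℤ, x = (a : ℝ) + (b : ℝ) * φ

/-- `u` is a unit of `ℤ[φ]`. -/
def IsUnitZphi (u : ℝ) : Prop := InZphi u ∧ ∃ v : ℝ, InZphi v ∧ u * v = 1

/-- The hypotheses of Lemma A.2: `α` is an algebraic integer `a + bφ` in `ℚ(√5)` with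
Galois conjugate `σα = a + bφ'`, the norm `α·σα` is `5^k` for some `k ≥ 1`, `α²` is an
integer multiple of a unit of `ℤ[φ]` (i.e. `α` is an algebraic d-number), and both `α`
and `σα` lie in the interval `[1, 18]`. -/
def DNumHyp (α σα : ℝ) : Prop :=
  (∃ a b : ℤ, α = (a : ℝ) + (b : ℝ) * φ ∧ σα = (a : ℝ) + (b : ℝ) * φconj) ∧
  (∃ k : ℕ, 1 ≤ k ∧ α * σα = 5 ^ k) ∧
  (∃ (m : ℤ) (u : ℝ), IsUnitZphi u ∧ α ^ 2 = (m : ℝ) * u) ∧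
  (1 ≤ α ∧ α ≤ 18 ∧ 1 ≤ σα ∧ σα ≤ 18)

theorem enum_aux : ∀ b ∈ Finset.Icc (-7 : ℤ) 7, ∀ S ∈ Finset.Icc (2 : ℤ) 36,
    ∀ k ∈ Finset.Icc (1 : ℕ) 3, S * S - 5 * b * b = 4 * 5 ^ k →
    (S = 5 ∧ (b = 1 ∨ b = -1)) ∨ (S = 10 ∧ (b = 4 ∨ b = -4 ∨ b = 0)) ∨
    (S = 15 ∧ (b = 5 ∨ b = -5)) ∨ (S = 25 ∧ (b = 5 ∨ b = -5)) := by
  decide +kernel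

theorem unit_aux (a b c d : ℤ) (h1 : a * c + b * d = 1) (h2 : a * d + b * c + b * d = 0) :
    IsUnitZphi ((a : ℝ) + b * φ) := by
  have h5 : Real.sqrt 5 ^ 2 = 5 := Real.sq_sqrt (by norm_num)
  have h1' : (a : ℝ) * c + b * d = 1 := by exact_mod_cast h1
  have h2' : (a : ℝ) * d + b * c + b * d = 0 := by exact_mod_cast h2
  refine ⟨⟨a, b, rfl⟩, (c : ℝ) + d * φ, ⟨c, d, rfl⟩, ?_⟩
  have hφ : φ ^ 2 = φ + 1 := by unfold φ; linear_combination h5 / 4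
  linear_combination h1' + φ * h2' + b * d * hφ

/-- The algebraic d-numbers in `ℚ(√5)` whose norm is a power of `5` and whose Galois
conjugates lie between `1` and `18` are exactly `(5±√5)/2`, `(5/2)(3±√5)`, and `5`. -/
theorem stmt14 :
    (∀ α σα : ℝ, DNumHyp α σα →
      α = (5 + Real.sqrt 5) / 2 ∨ α = (5 - Real.sqrt 5) / 2 ∨
      α = 5 / 2 * (3 + Real.sqrt 5) ∨ α = 5 / 2 * (3 - Real.sqrt 5) ∨ α = 5) ∧
    DNumHyp ((5 + Real.sqrt 5) / 2) ((5 - Real.sqrt 5) / 2) ∧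
    DNumHyp ((5 - Real.sqrt 5) / 2) ((5 + Real.sqrt 5) / 2) ∧
    DNumHyp (5 / 2 * (3 + Real.sqrt 5)) (5 / 2 * (3 - Real.sqrt 5)) ∧
    DNumHyp (5 / 2 * (3 - Real.sqrt 5)) (5 / 2 * (3 + Real.sqrt 5)) ∧
    DNumHyp 5 5 := by
  have h5 : Real.sqrt 5 ^ 2 = 5 := Real.sq_sqrt (by norm_num)
  have hl : 2.236 < Real.sqrt 5 := Real.lt_sqrt_of_sq_lt (by norm_num)
  have hu : Real.sqrt 5 < 2.237 := (Real.sqrt_lt' (by norm_num)).2 (by norm_num)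
  refine ⟨?_, ?_, ?_, ?_, ?_, ?_⟩
  · rintro α σα ⟨⟨a, b, hα, hσ⟩, ⟨k, hk, hN⟩, -, l1, u1, l2, u2⟩
    unfold φ at hα
    unfold φconj at hσ
    have hS : α + σα = ((2 * a + b : ℤ) : ℝ) := by
      rw [hα, hσ]; push_cast; ring
    have hD : α - σα = b * Real.sqrt 5 := by rw [hα, hσ]; ring
    have hα' : α = (((2 * a + b : ℤ) : ℝ) + b * Real.sqrt 5) / 2 := by linarith
    have hσ' : σα = (((2 * a + b : ℤ) : ℝ) - b * Real.sqrt 5) / 2 := by linarith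
    generalize 2 * a + b = S at hS hα' hσ'
    have hb1 : b ≤ 7 := by
      by_contra! h
      have : (8 : ℝ) ≤ b := by exact_mod_cast h
      nlinarith
    have hb2 : -7 ≤ b := by
      by_contra! h
      have : (b : ℝ) ≤ -8 := by exact_mod_cast (by omega : b ≤ -8)
      nlinarith
    have hS1 : 2 ≤ S := by
      have : (2 : ℝ) ≤ S := by linarith
      exact_mod_cast this
    have hS2 : S ≤ 36 := by
      have : (S : ℝ) ≤ 36 := by linarith
      exact_mod_cast this
    have hk3 : k ≤ 3 := by
      by_contra! h
      have h4 : (5 : ℝ) ^ 4 ≤ 5 ^ k := pow_le_pow_right₀ (by norm_num) h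
      nlinarith
    have hE : S * S - 5 * b * b = 4 * 5 ^ k := by
      have : (S : ℝ) * S - 5 * b * b = 4 * 5 ^ k := by
        rw [← hN, hα', hσ']
        linear_combination (b : ℝ) ^ 2 * h5
      exact_mod_cast this
    clear hα hσ hN
    rcases enum_aux b (Finset.mem_Icc.2 ⟨hb2, hb1⟩) S (Finset.mem_Icc.2 ⟨hS1, hS2⟩) k
      (Finset.mem_Icc.2 ⟨hk, hk3⟩) hE with
      ⟨rfl, rfl | rfl⟩ | ⟨rfl, rfl | rfl | rfl⟩ | ⟨rfl, rfl | rfl⟩ | ⟨rfl, rfl | rfl⟩ <;>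
      push_cast at hα' hσ'
    · left; linarith
    · right; left; linarith
    · exfalso; linarith
    · exfalso; linarith
    · right; right; right; right; linarith
    · right; right; left; linarith
    · right; right; right; left; linarith
    · exfalso; linarith
    · exfalso; linarith
  · refine ⟨⟨2, 1, ?_, ?_⟩, ⟨1, le_rfl, ?_⟩, ⟨5, _, unit_aux 1 1 2 (-1) ?_ ?_, ?_⟩, ?_, ?_, ?_, ?_⟩ <;>
      first | norm_num; done | linarith | (simp only [φ, φconj]; push_cast; ring_nf; try rw [h5]; try ring_nf)
  · refine ⟨⟨3, -1, ?_, ?_⟩, ⟨1, le_rfl, ?_⟩, ⟨5, _, unit_aux 2 (-1) 1 1 ?_ ?_, ?_⟩, ?_, ?_, ?_, ?_⟩ <;>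
      first | norm_num; done | linarith | (simp only [φ, φconj]; push_cast; ring_nf; try rw [h5]; try ring_nf)
  · refine ⟨⟨5, 5, ?_, ?_⟩, ⟨2, by norm_num, ?_⟩, ⟨25, _, unit_aux 2 3 5 (-3) ?_ ?_, ?_⟩, ?_, ?_, ?_, ?_⟩ <;>
      first | norm_num; done | linarith | (simp only [φ, φconj]; push_cast; ring_nf; try rw [h5]; try ring_nf)
  · refine ⟨⟨10, -5, ?_, ?_⟩, ⟨2, by norm_num, ?_⟩, ⟨25, _, unit_aux 5 (-3) 2 3 ?_ ?_, ?_⟩, ?_, ?_, ?_, ?_⟩ <;>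
      first | norm_num; done | linarith | (simp only [φ, φconj]; push_cast; ring_nf; try rw [h5]; try ring_nf)
  · refine ⟨⟨5, 0, ?_, ?_⟩, ⟨2, by norm_num, ?_⟩, ⟨25, _, unit_aux 1 0 1 0 ?_ ?_, ?_⟩, ?_, ?_, ?_, ?_⟩ <;>
      norm_num
end

section
/- If x and y are positive real numbers satisfying x + y = x² + y² + ((√5−1)/2)·x·y, then x + y < 2. -/
/-- If `x` and `y` are positive reals with `x + y = x² + y² + ((√5−1)/2)·x·y`,
then `x + y < 2`. -/
theorem stmt17 (x y : ℝ) (hx : 0 < x) (hy : 0 < y)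
    (h : x + y = x ^ 2 + y ^ 2 + (Real.sqrt 5 - 1) / 2 * x * y) :
    x + y < 2 := by
  have h5 : 1 < Real.sqrt 5 := by
    rw [Real.lt_sqrt (by norm_num)]
    norm_num
  have hc : 0 < (Real.sqrt 5 - 1) / 2 := by linarith
  have hp : 0 < (Real.sqrt 5 - 1) / 2 * x * y := mul_pos (mul_pos hc hx) hy
  by_contra hn
  have hn2 : 2 ≤ x + y := not_lt.mp hn
  nlinarith [sq_nonneg (x - y), mul_nonneg (sub_nonneg.mpr hn2) (add_pos hx hy).le]
end
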